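/- Let A be an Artin–Schelter regular connected graded k-algebra of global dimension n. Then A^e := A ⊗_k A^op is Artin–Schelter regular of global dimension 2n: gldim(A^e) = 2n, Ext^i_{A^e}(k, A^e) = 0 for all i ≠ 2n, and Ext^{2n}_{A^e}(k, A^e) is a 1-dimensional k-vector space (and the same holds over (A^e)^op). -/

import Mathlib

open CategoryTheory Limits TensorProduct

universe u

/-- The injective dimension of a module `M`, defined as the least `n : ℕ∞` for which
there is an injective resolution of `M` that vanishes in all cohomological degrees `> n`. -/
noncomputable def ModuleCat.injDim {R : Type u} [Ring R] (M : ModuleCat.{u} R) : ℕ∞ :=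
  sInf {n : ℕ∞ | ∃ I : InjectiveResolution M, ∀ i : ℕ, n < (i : ℕ∞) → IsZero (I.cocomplex.X i)}

/-- The projective dimension of a module `M`, defined as the least `n : ℕ∞` for which
there is a projective resolution of `M` that vanishes in all homological degrees `> n`. -/
noncomputable def ModuleCat.projDim {R : Type u} [Ring R] (M : ModuleCat.{u} R) : ℕ∞ :=
  sInf {n : ℕ∞ | ∃ P : ProjectiveResolution M, ∀ i : ℕ, n < (i : ℕ∞) → IsZero (P.complex.X i)}

/-- The injective dimension of a ring as a left module over itself. -/
noncomputable def Ring.selfInjDim (R : Type u) [Ring R] : ℕ∞ :=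
  ModuleCat.injDim (ModuleCat.of R R)

/-- The left global dimension of a ring: the supremum of the projective dimensions
of all left `R`-modules. -/
noncomputable def Ring.globalDim (R : Type u) [Ring R] : ℕ∞ :=
  ⨆ M : ModuleCat.{u} R, M.projDim

set_option synthInstance.maxHeartbeats 1000000
set_option maxHeartbeats 1000000

/-- The Ext groups `Ext^i_R(M, N)` over a `k`-algebra `R`, as `k`-vector spaces. -/
noncomputable def extGroup (k : Type u) [Field k] (R : Type u) [Ring R] [Algebra k R]
    (M N : ModuleCat.{u} R) (i : ℕ) : ModuleCat.{u} k :=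
  ((Ext k (ModuleCat.{u} R) i).obj (Opposite.op M)).obj N

/-- The augmentation of `Rᵐᵒᵖ` induced by an augmentation `ε : R →ₐ[k] k`. -/
def mopAug {k : Type u} [Field k] {R : Type u} [Ring R] [Algebra k R] (ε : R →ₐ[k] k) :
    Rᵐᵒᵖ →ₐ[k] k where
  toRingHom := ε.toRingHom.fromOpposite fun x y => Commute.all _ _
  commutes' r := by
    show ε (MulOpposite.unop (algebraMap k Rᵐᵒᵖ r)) = _
    simp

/-- An augmented `k`-algebra `(R, ε)` is Artin–Schelter regular of global dimension `n` if:
`gldim R = n`, `Ext^i_R(k, R) = 0` for `i ≠ n`, `Ext^n_R(k, R)` is a `1`-dimensional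
`k`-vector space, and the same conditions hold over `Rᵐᵒᵖ` (with the trivial modules given
by the augmentation). -/
noncomputable def IsASRegularAug (k : Type u) [Field k] (R : Type u) [Ring R] [Algebra k R]
    (ε : R →ₐ[k] k) (n : ℕ) : Prop :=
  letI : Module R k := Module.compHom k ε.toRingHom
  letI : Module Rᵐᵒᵖ k := Module.compHom k (mopAug ε).toRingHom
  Ring.globalDim R = (n : ℕ∞) ∧
    (∀ i : ℕ, i ≠ n →
      Subsingleton (extGroup k R (ModuleCat.of R k) (ModuleCat.of R R) i)) ∧
    Nonempty ((extGroup k R (ModuleCat.of R k) (ModuleCat.of R R) n) ≃ₗ[k] k) ∧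
    (∀ i : ℕ, i ≠ n →
      Subsingleton (extGroup k Rᵐᵒᵖ (ModuleCat.of Rᵐᵒᵖ k) (ModuleCat.of Rᵐᵒᵖ Rᵐᵒᵖ) i)) ∧
    Nonempty ((extGroup k Rᵐᵒᵖ (ModuleCat.of Rᵐᵒᵖ k) (ModuleCat.of Rᵐᵒᵖ Rᵐᵒᵖ) n) ≃ₗ[k] k)

set_option linter.style.haveILetI false
set_option linter.unusedVariables false
set_option linter.unusedSectionVars false

namespace ASR

/-- An exact left resolution of a module, in elementary terms. -/
structure XRes (R : Type u) [Ring R] (M : Type u) [AddCommGroup M] [Module R M] where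
  X : ℕ → ModuleCat.{u} R
  d : ∀ i, X (i + 1) →ₗ[R] X i
  aug : X 0 →ₗ[R] M
  aug_surj : Function.Surjective aug
  exact0 : ∀ x, aug x = 0 ↔ ∃ y, d 0 y = x
  exact : ∀ i x, d i x = 0 ↔ ∃ y, d (i + 1) y = x

namespace XRes

variable {R : Type u} [Ring R] {M : Type u} [AddCommGroup M] [Module R M]

lemma dd (P : XRes R M) (i : ℕ) (x) : P.d i (P.d (i + 1) x) = 0 :=
  (P.exact i _).2 ⟨x, rfl⟩

lemma augd (P : XRes R M) (x) : P.aug (P.d 0 x) = 0 :=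
  (P.exact0 _).2 ⟨x, rfl⟩

/-- the associated chain complex -/
noncomputable def cx (P : XRes R M) : ChainComplex (ModuleCat.{u} R) ℕ :=
  ChainComplex.of P.X (fun i => ModuleCat.ofHom (P.d i)) (fun i => by
    ext x
    exact P.dd i x)

lemma cx_d (P : XRes R M) (i : ℕ) : P.cx.d (i + 1) i = ModuleCat.ofHom (P.d i) :=
  ChainComplex.of_d P.X (fun i => ModuleCat.ofHom (P.d i)) i

/-- the associated projective resolution -/
noncomputable def toPR (P : XRes R M) (hP : ∀ i, Module.Projective R (P.X i)) :
    ProjectiveResolution (ModuleCat.of R M) where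
  complex := P.cx
  projective i := (IsProjective.iff_projective (P.X i)).1 (hP i)
  π := (ChainComplex.toSingle₀Equiv P.cx (ModuleCat.of R M)).symm ⟨ModuleCat.ofHom P.aug, by
    rw [cx_d]
    ext x
    exact P.augd x⟩
  quasiIso := ⟨fun n => by
    cases n with
    | zero =>
      rw [ChainComplex.quasiIsoAt₀_iff, ShortComplex.quasiIso_iff_of_zeros']
      · refine (ShortComplex.exact_and_epi_g_iff_of_iso (S₂ := ShortComplex.mk
          (ModuleCat.ofHom (P.d 0)) (ModuleCat.ofHom P.aug) (by ext x; exact P.augd x)) ?_).2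
          ⟨?_, ?_⟩
        · refine ShortComplex.isoMk (Iso.refl _) (Iso.refl _) (Iso.refl _) ?_ ?_
          · simp [cx_d]
            rfl
          · simp
            rfl
        · rw [ShortComplex.moduleCat_exact_iff]
          intro x hx
          exact (P.exact0 x).1 hx
        · exact (ModuleCat.epi_iff_surjective _).2 P.aug_surj
      all_goals rfl
    | succ n =>
      rw [quasiIsoAt_iff_exactAt']
      · rw [HomologicalComplex.exactAt_iff' _ (n + 2) (n + 1) n (by simp) (by simp)]
        rw [ShortComplex.moduleCat_exact_iff]
        intro x hx
        have e1 := P.cx_d n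
        have e2 := P.cx_d (n + 1)
        change (P.cx.d (n + 1) n) x = 0 at hx
        rw [e1] at hx
        obtain ⟨y, hy⟩ := (P.exact n x).1 hx
        refine ⟨y, ?_⟩
        change (P.cx.d (n + 1 + 1) (n + 1)) y = x
        rw [e2]
        exact hy
      · apply ChainComplex.exactAt_succ_single_obj⟩

/-- boundaries in `Hom(X_i, N)` -/
def Bdry (P : XRes R M) {N : Type u} [AddCommGroup N] [Module R N] :
    ∀ (i : ℕ), (P.X i →ₗ[R] N) → Prop
  | 0, f => f = 0
  | i + 1, f => ∃ g : P.X i →ₗ[R] N, f = g ∘ₗ P.d i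

section Ext
variable {k : Type u} [Field k] [Algebra k R]

open ModuleCat in
lemma ext_equiv (P : XRes R M) (hP : ∀ i, Module.Projective R (P.X i)) (N : ModuleCat.{u} R)
    (i : ℕ) : ∃ (Z : Submodule k (P.X i ⟶ N)) (B : Submodule k Z),
      (∀ f, f ∈ Z ↔ f.hom ∘ₗ P.d i = 0) ∧
      (∀ f : Z, f ∈ B ↔ P.Bdry i f.1.hom) ∧
      Nonempty (extGroup k R (ModuleCat.of R M) N i ≃ₗ[k] (Z ⧸ B)) := by
  let K := P.cx.linearYonedaObj k N
  let S := K.sc' (i - 1) i (i + 1)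
  refine ⟨LinearMap.ker S.g.hom, LinearMap.range S.moduleCatToCycles, ?_, ?_, ?_⟩
  · intro f
    change P.cx.d (i + 1) i ≫ f = 0 ↔ _
    rw [cx_d]
    constructor
    · intro h
      have := congrArg ModuleCat.Hom.hom h
      exact this
    · intro h
      ext x
      exact LinearMap.congr_fun h x
  · intro f
    cases i with
    | zero =>
      constructor
      · rintro ⟨y, hy⟩
        have h0 : S.f = 0 := K.shape _ _ (by simp)
        have h1 : f.1 = S.f y := by rw [← hy]; rfl
        rw [h0] at h1
        change f.1.hom = 0
        rw [h1]
        rfl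
      · intro h
        have : f = 0 := by
          apply Subtype.ext
          apply ModuleCat.hom_ext
          exact h
        rw [this]
        exact Submodule.zero_mem _
    | succ i =>
      constructor
      · rintro ⟨y, hy⟩
        have h1 : f.1 = P.cx.d (i + 1) i ≫ y := by rw [← hy]; rfl
        rw [cx_d] at h1
        refine ⟨ModuleCat.Hom.hom y, ?_⟩
        rw [h1]
        rfl
      · rintro ⟨g, hg⟩
        refine ⟨ModuleCat.ofHom g, ?_⟩
        apply Subtype.ext
        change P.cx.d (i + 1) i ≫ ModuleCat.ofHom g = f.1
        rw [cx_d]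
        apply ModuleCat.hom_ext
        exact hg.symm
  · have e1 := ((P.toPR hP).isoExt (R := k) i N)
    have e2 : K.homology i ≅ S.homology :=
      ShortComplex.homologyMapIso (K.isoSc' (i - 1) i (i + 1) (by cases i <;> simp) (by simp))
    exact ⟨(e1 ≪≫ e2 ≪≫ S.moduleCatHomologyIso).toLinearEquiv⟩

lemma ext_subsingleton (P : XRes R M) (hP : ∀ i, Module.Projective R (P.X i))
    (N : Type u) [AddCommGroup N] [Module R N] (i : ℕ) :
    Subsingleton (extGroup k R (ModuleCat.of R M) (ModuleCat.of R N) i) ↔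
      ∀ f : P.X i →ₗ[R] N, f ∘ₗ P.d i = 0 → P.Bdry i f := by
  obtain ⟨Z, B, hZ, hB, ⟨e⟩⟩ := P.ext_equiv (k := k) hP (ModuleCat.of R N) i
  rw [e.toEquiv.subsingleton_congr, Submodule.Quotient.subsingleton_iff, eq_top_iff]
  constructor
  · intro h f hf
    exact (hB ⟨ModuleCat.ofHom f, (hZ _).2 hf⟩).1 (h trivial)
  · intro h f _
    exact (hB f).2 (h _ ((hZ _).1 f.2))

lemma ext_one (P : XRes R M) (hP : ∀ i, Module.Projective R (P.X i)) (i : ℕ) :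
    Nonempty (extGroup k R (ModuleCat.of R M) (ModuleCat.of R R) i ≃ₗ[k] k) ↔
      ∃ f0 : P.X i →ₗ[R] R, f0 ∘ₗ P.d i = 0 ∧ ¬ P.Bdry i f0 ∧
        ∀ f : P.X i →ₗ[R] R, f ∘ₗ P.d i = 0 → ∃ c : k, P.Bdry i (f - c • f0) := by
  obtain ⟨Z, B, hZ, hB, ⟨e⟩⟩ := P.ext_equiv (k := k) hP (ModuleCat.of R R) i
  have key : Nonempty (extGroup k R (ModuleCat.of R M) (ModuleCat.of R R) i ≃ₗ[k] k) ↔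
      ∃ q : Z ⧸ B, q ≠ 0 ∧ ∀ q', ∃ c : k, q' = c • q := by
    constructor
    · rintro ⟨e'⟩
      let e2 := e.symm.trans e'
      refine ⟨e2.symm 1, by simp, fun q' => ⟨e2 q', e2.injective ?_⟩⟩
      simp
    · rintro ⟨q, hq, h⟩
      refine ⟨e.trans (LinearEquiv.ofBijective (LinearMap.toSpanSingleton k _ q) ⟨?_, ?_⟩).symm⟩
      · rw [← LinearMap.ker_eq_bot]
        exact LinearMap.ker_toSpanSingleton k hq
      · intro q'
        obtain ⟨c, hc⟩ := h q'
        exact ⟨c, by simp [hc]⟩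
  rw [key]
  constructor
  · rintro ⟨q, hq, h⟩
    obtain ⟨f0, rfl⟩ := Submodule.mkQ_surjective _ q
    refine ⟨f0.1.hom, (hZ _).1 f0.2, fun hb => hq ?_, fun f hf => ?_⟩
    · simpa using (hB f0).2 hb
    · obtain ⟨c, hc⟩ := h (B.mkQ ⟨ModuleCat.ofHom f, (hZ _).2 hf⟩)
      refine ⟨c, ?_⟩
      rw [← map_smul, ← sub_eq_zero, ← map_sub, Submodule.mkQ_apply,
        Submodule.Quotient.mk_eq_zero, hB] at hc
      convert hc using 1
      ext x
      change f x - c • f0.1.hom x = f x - algebraMap k R c • f0.1.hom x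
      rw [algebraMap_smul]
  · rintro ⟨f0, h0, h1, h2⟩
    let z0 : Z := ⟨ModuleCat.ofHom f0, (hZ _).2 h0⟩
    refine ⟨B.mkQ z0, fun hq => h1 ?_, fun q' => ?_⟩
    · rw [Submodule.mkQ_apply, Submodule.Quotient.mk_eq_zero, hB] at hq
      exact hq
    · obtain ⟨f, rfl⟩ := Submodule.mkQ_surjective _ q'
      obtain ⟨c, hc⟩ := h2 f.1.hom ((hZ _).1 f.2)
      refine ⟨c, ?_⟩
      rw [← map_smul, ← sub_eq_zero, ← map_sub, Submodule.mkQ_apply,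
        Submodule.Quotient.mk_eq_zero, hB]
      convert hc using 1
      ext x
      change f.1.hom x - algebraMap k R c • f0 x = f.1.hom x - c • f0 x
      rw [algebraMap_smul]

end Ext

end XRes
end ASR

namespace ASR

section
variable {R : Type u} [Ring R]

lemma ext_vanish (k : Type u) [Field k] [Algebra k R] (M N : ModuleCat.{u} R) (i : ℕ)
    (h : M.projDim < (i : ℕ∞)) : Subsingleton (extGroup k R M N i) := by
  unfold ModuleCat.projDim at h
  rw [sInf_lt_iff] at h
  obtain ⟨n, ⟨P, hP⟩, hn⟩ := h
  have e := P.isoExt (R := k) i N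
  have hz : IsZero ((P.complex.linearYonedaObj k N).homology i) := by
    rw [← HomologicalComplex.exactAt_iff_isZero_homology, HomologicalComplex.exactAt_iff]
    refine ShortComplex.exact_of_isZero_X₂ _ ?_
    rw [IsZero.iff_id_eq_zero]
    ext (x : _ ⟶ _)
    obtain rfl : x = 0 := (hP i hn).eq_of_src _ _
    rfl
  exact ModuleCat.subsingleton_of_isZero (hz.of_iso e)

variable {M : Type u} [AddCommGroup M] [Module R M]

/-- shifting a resolution -/
noncomputable def XRes.shift (P : XRes R M) : XRes R (LinearMap.ker P.aug) where
  X i := P.X (i + 1)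
  d i := P.d (i + 1)
  aug := (P.d 0).codRestrict _ (fun x => P.augd x)
  aug_surj := by
    rintro ⟨x, hx⟩
    obtain ⟨y, hy⟩ := (P.exact0 x).1 hx
    exact ⟨y, Subtype.ext hy⟩
  exact0 x := by
    rw [← P.exact 0 x, ← Subtype.coe_inj]
    rfl
  exact i x := P.exact (i + 1) x

lemma pd_of_res (c m : ℕ) : ∀ {M : Type u} [AddCommGroup M] [Module R M] (P : XRes R M)
    (_ : ∀ i, HasProjectiveDimensionLE (P.X i) c) (_ : ∀ i, m < i → Subsingleton (P.X i)),
    HasProjectiveDimensionLE (ModuleCat.of R M) (m + c) := by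
  induction m with
  | zero =>
    intro M _ _ P h1 h2
    have hinj : Function.Injective P.aug := by
      rw [injective_iff_map_eq_zero]
      intro x hx
      obtain ⟨y, hy⟩ := (P.exact0 x).1 hx
      have := h2 1 (by simp)
      rw [← hy, Subsingleton.elim y 0, map_zero]
    have e : P.X 0 ≅ ModuleCat.of R M :=
      (LinearEquiv.ofBijective P.aug ⟨hinj, P.aug_surj⟩).toModuleIso
    have := h1 0
    rw [zero_add]
    exact hasProjectiveDimensionLT_of_iso e _
  | succ m ih =>
    intro M _ _ P h1 h2
    have hk := ih P.shift (fun i => h1 (i + 1)) (fun i hi => h2 (i + 1) (by omega))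
    have hs := LinearMap.shortExact_shortComplexKer P.aug_surj
    have := h1 0
    refine hs.hasProjectiveDimensionLT_X₃ (m + 1 + c) ?_ ?_
    · have e : m + 1 + c = m + c + 1 := by omega
      rw [e]
      exact hk
    · exact hasProjectiveDimensionLT_of_ge (P.X 0) (c + 1) _ (by omega)

/-- terms of a spliced resolution -/
noncomputable def spliceX (F : Type u) [AddCommGroup F] [Module R F]
    {K : Type u} [AddCommGroup K] [Module R K] (P : XRes R K) : ℕ → ModuleCat.{u} R
  | 0 => ModuleCat.of R F
  | j + 1 => P.X j

/-- differentials of a spliced resolution -/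
noncomputable def spliceD {F : Type u} [AddCommGroup F] [Module R F] {M : Type u} [AddCommGroup M]
    [Module R M] (f : F →ₗ[R] M) (P : XRes R (LinearMap.ker f)) :
    ∀ i, spliceX F P (i + 1) →ₗ[R] spliceX F P i
  | 0 => (LinearMap.ker f).subtype ∘ₗ P.aug
  | j + 1 => P.d j

lemma exists_res (m : ℕ) : ∀ (M : ModuleCat.{u} R) (_ : HasProjectiveDimensionLE M m),
    ∃ P : XRes R M, (∀ i, Module.Projective R (P.X i)) ∧ ∀ i, m < i → Subsingleton (P.X i) := by
  induction m with
  | zero =>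
    intro M hM
    have hp : Module.Projective R M :=
      (IsProjective.iff_projective M).2 ((projective_iff_hasProjectiveDimensionLE_zero M).2 hM)
    refine ⟨{ X := fun i => Nat.casesOn i M (fun _ => ModuleCat.of R PUnit.{u+1})
              d := fun i => 0
              aug := LinearMap.id
              aug_surj := fun x => ⟨x, rfl⟩
              exact0 := fun x => ⟨fun h => ⟨0, h.symm⟩, fun ⟨y, hy⟩ => hy.symm⟩
              exact := fun i x => ⟨fun _ => ⟨0, Subsingleton.elim (α := PUnit.{u+1}) _ _⟩,
                fun _ => rfl⟩ }, ?_, ?_⟩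
    · rintro (_ | i)
      · exact hp
      · change Module.Projective R PUnit.{u+1}
        infer_instance
    · rintro (_ | i) h
      · omega
      · exact inferInstanceAs (Subsingleton PUnit.{u+1})
  | succ m ih =>
    intro M hM
    let F : Type u := M →₀ R
    let f : F →ₗ[R] M := Finsupp.linearCombination R id
    have hf : Function.Surjective f := Finsupp.linearCombination_id_surjective R M
    have hs := LinearMap.shortExact_shortComplexKer hf
    have hpr : Projective (ModuleCat.of R F) :=
      (IsProjective.iff_projective F).1 inferInstance
    have hk : HasProjectiveDimensionLE (ModuleCat.of R (LinearMap.ker f)) m :=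
      (hs.hasProjectiveDimensionLT_X₃_iff m hpr).1 hM
    obtain ⟨P, hP1, hP2⟩ := ih _ hk
    refine ⟨{ X := spliceX F P
              d := spliceD f P
              aug := f
              aug_surj := hf
              exact0 := ?_
              exact := ?_ }, ?_, ?_⟩
    · intro x
      constructor
      · intro hx
        obtain ⟨y, hy⟩ := P.aug_surj ⟨x, hx⟩
        exact ⟨y, congrArg Subtype.val hy⟩
      · rintro ⟨y, rfl⟩
        exact (P.aug y).2
    · rintro (_ | i) x
      · refine Iff.trans ?_ (P.exact0 x)
        change (P.aug x).1 = 0 ↔ _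
        exact ⟨fun h => Subtype.ext h, fun h => congrArg Subtype.val h⟩
      · exact P.exact i x
    · rintro (_ | i)
      · change Module.Projective R F
        infer_instance
      · exact hP1 i
    · rintro (_ | i) h
      · omega
      · exact hP2 i (by omega)

lemma projDim_le_of_res {m : ℕ} (P : XRes R M) (hP : ∀ i, Module.Projective R (P.X i))
    (h : ∀ i, m < i → Subsingleton (P.X i)) : (ModuleCat.of R M).projDim ≤ m := by
  refine sInf_le ⟨P.toPR hP, fun i hi => ?_⟩
  have := h i (by exact_mod_cast hi)
  exact ModuleCat.isZero_of_subsingleton (P.X i)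

lemma projDim_le {m : ℕ} (M : ModuleCat.{u} R) (h : HasProjectiveDimensionLE M m) :
    M.projDim ≤ m := by
  obtain ⟨P, h1, h2⟩ := exists_res m M h
  exact projDim_le_of_res P h1 h2

end
end ASR

namespace ASR

section Kunneth
variable {k : Type u} [Field k] {V V' : Type u} [AddCommGroup V] [Module k V]
  [AddCommGroup V'] [Module k V']

lemma exists_homotopy (d : V →ₗ[k] V) (φ : V →ₗ[k] k) (v : V)
    (hdd : ∀ x, d (d x) = 0) (hφd : ∀ x, φ (d x) = 0) (hdv : d v = 0) (hφv : φ v = 1)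
    (hex : ∀ x, d x = 0 → φ x = 0 → ∃ z, x = d z) :
    ∃ S : V →ₗ[k] V, ∀ x, d (S x) + S (d x) = x - φ x • v := by
  obtain ⟨s0, hs0⟩ := d.rangeRestrict.exists_rightInverse_of_surjective d.range_rangeRestrict
  let s : LinearMap.range d →ₗ[k] V := s0 - (φ ∘ₗ s0).smulRight v
  have hs0' : ∀ r, d (s0 r) = r := fun r => congrArg Subtype.val (LinearMap.congr_fun hs0 r)
  have hs : ∀ r, d (s r) = r := fun r => by simp [s, hdv, hs0']
  have hφs : ∀ r, φ (s r) = 0 := fun r => by simp [s, hφv]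
  let u0 : V →ₗ[k] V := LinearMap.id - φ.smulRight v - s ∘ₗ d.rangeRestrict
  let U : V →ₗ[k] LinearMap.range d := u0.codRestrict _ (fun x => by
    obtain ⟨z, hz⟩ := hex (u0 x) (by simp [u0, hdv, hs]) (by simp [u0, hφv, hφs])
    exact ⟨z, hz.symm⟩)
  refine ⟨s ∘ₗ U, fun x => ?_⟩
  have h1 : d ((s ∘ₗ U) x) = x - φ x • v - s (d.rangeRestrict x) := hs (U x)
  have h2 : U (d x) = d.rangeRestrict x := by
    apply Subtype.ext
    have : d.rangeRestrict (d x) = 0 := Subtype.ext (hdd x)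
    simp [U, u0, hφd, this]
  rw [h1, LinearMap.comp_apply, h2]
  abel

/-- the total differential on a tensor product -/
noncomputable def totD (d σ : V →ₗ[k] V) (d' : V' →ₗ[k] V') : V ⊗[k] V' →ₗ[k] V ⊗[k] V' :=
  TensorProduct.map d LinearMap.id + TensorProduct.map σ d'

/-- product of functionals -/
noncomputable def totφ (φ : V →ₗ[k] k) (φ' : V' →ₗ[k] k) : V ⊗[k] V' →ₗ[k] k :=
  TensorProduct.lift ((LinearMap.mul k k).compl₁₂ φ φ')

lemma kunneth (d σ : V →ₗ[k] V) (φ : V →ₗ[k] k) (hσσ : ∀ x, σ (σ x) = x)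
    (hσd : ∀ x, σ (d x) = - d (σ x))
    (hex : ∀ x, d x = 0 → φ x = 0 → ∃ z, x = d z)
    (d' : V' →ₗ[k] V') (φ' : V' →ₗ[k] k) (v' : V')
    (hdd' : ∀ x, d' (d' x) = 0) (hφd' : ∀ x, φ' (d' x) = 0) (hdv' : d' v' = 0) (hφv' : φ' v' = 1)
    (hex' : ∀ x, d' x = 0 → φ' x = 0 → ∃ z, x = d' z)
    (x : V ⊗[k] V') (hx : totD d σ d' x = 0) (hφx : totφ φ φ' x = 0) :
    ∃ z, x = totD d σ d' z := by
  obtain ⟨S, hS⟩ := exists_homotopy d' φ' v' hdd' hφd' hdv' hφv' hex'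
  let H : V ⊗[k] V' →ₗ[k] V ⊗[k] V' := TensorProduct.map σ S
  let Y : V ⊗[k] V' →ₗ[k] V :=
    TensorProduct.lift ((LinearMap.lsmul k V).flip.compl₂ φ')
  have hY : ∀ a b, Y (a ⊗ₜ b) = φ' b • a := fun a b => by simp [Y]
  have key : ∀ x, totD d σ d' (H x) + H (totD d σ d' x) = x - Y x ⊗ₜ v' := by
    intro x
    induction x with
    | zero => simp
    | add x y hx hy =>
      simp only [map_add, TensorProduct.add_tmul]
      rw [add_add_add_comm, hx, hy]
      abel
    | tmul a b =>
      rw [hY]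
      simp only [totD, H, LinearMap.add_apply, TensorProduct.map_tmul, LinearMap.id_apply, map_add,
        hσσ, hσd, TensorProduct.neg_tmul]
      have := congrArg (fun t => a ⊗ₜ[k] t) (hS b)
      simp only [TensorProduct.tmul_add, TensorProduct.tmul_sub] at this
      rw [TensorProduct.smul_tmul]
      rw [← this]
      abel
  have hdY : ∀ x, d (Y x) = Y (totD d σ d' x) := by
    intro x
    induction x with
    | zero => simp
    | add x y hx hy => simp only [map_add, hx, hy]
    | tmul a b => simp [totD, hY, hφd']
  have hφY : ∀ x, φ (Y x) = totφ φ φ' x := by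
    intro x
    induction x with
    | zero => simp
    | add x y hx hy => simp only [map_add, hx, hy]
    | tmul a b => simp [totφ, hY, mul_comm]
  obtain ⟨z, hz⟩ := hex (Y x) (by rw [hdY, hx, map_zero]) (by rw [hφY, hφx])
  refine ⟨H x + z ⊗ₜ v', ?_⟩
  have h1 := key x
  rw [hx, map_zero, add_zero, eq_sub_iff_add_eq] at h1
  have h2 : totD d σ d' (z ⊗ₜ v') = Y x ⊗ₜ v' := by
    simp [totD, hdv', hz]
  rw [map_add, h2, h1]

end Kunneth

end ASR

namespace ASR

section Mat
variable (k : Type u) [Field k] {R : Type u} [Ring R] [Algebra k R] {I : Type u} [Fintype I]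

/-- row vector times matrix -/
noncomputable def mL (D : I → I → R) : (I → R) →ₗ[k] (I → R) where
  toFun f j := ∑ i, f i * D i j
  map_add' f g := by ext j; simp [add_mul, Finset.sum_add_distrib]
  map_smul' c f := by ext j; simp [Finset.smul_sum]

/-- matrix times column vector -/
noncomputable def mR (D : I → I → R) : (I → R) →ₗ[k] (I → R) where
  toFun f i := ∑ j, D i j * f j
  map_add' f g := by ext j; simp [mul_add, Finset.sum_add_distrib]
  map_smul' c f := by ext j; simp [Finset.smul_sum]

variable {k}
/-- augmentation functional -/
noncomputable def ph (ε : R →ₐ[k] k) (a : I → k) : (I → R) →ₗ[k] k where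
  toFun f := ∑ i, ε (f i) * a i
  map_add' f g := by simp [add_mul, Finset.sum_add_distrib]
  map_smul' c f := by simp [Finset.mul_sum, mul_assoc]

lemma mL_apply (D : I → I → R) (f : I → R) (j) : mL k D f j = ∑ i, f i * D i j := rfl
lemma mR_apply (D : I → I → R) (f : I → R) (i) : mR k D f i = ∑ j, D i j * f j := rfl
lemma ph_apply (ε : R →ₐ[k] k) (a : I → k) (f : I → R) : ph ε a f = ∑ i, ε (f i) * a i := rfl

end Mat

/-- A finite free resolution of `k` with self-dual exactness, given by one matrix. -/
structure PDRes {k : Type u} [Field k] {R : Type u} [Ring R] [Algebra k R] (ε : R →ₐ[k] k)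
    (n : ℕ) where
  I : Type u
  fI : Fintype I
  deg : I → ℕ
  deg_le : ∀ i, deg i ≤ n
  D : I → I → R
  D_deg : ∀ i j, D i j ≠ 0 → deg i = deg j + 1
  a : I → k
  b : I → k
  a0 : ∃ i, a i ≠ 0
  b0 : ∃ i, b i ≠ 0
  a_deg : ∀ i, a i ≠ 0 → deg i = 0
  b_deg : ∀ i, b i ≠ 0 → deg i = n
  ddL : ∀ f, mL k D (mL k D f) = 0
  ddR : ∀ f, mR k D (mR k D f) = 0
  phL : ∀ f, ph ε a (mL k D f) = 0
  phR : ∀ f, ph ε b (mR k D f) = 0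
  exL : ∀ f, mL k D f = 0 → ph ε a f = 0 → ∃ g, f = mL k D g
  exR : ∀ f, mR k D f = 0 → ph ε b f = 0 → ∃ g, f = mR k D g

attribute [instance] PDRes.fI

namespace PDRes

section basic
variable {k : Type u} [Field k] {R : Type u} [Ring R] [Algebra k R] {ε : R →ₐ[k] k} {n : ℕ}

/-- passing to the opposite ring -/
noncomputable def op (P : PDRes ε n) : PDRes (mopAug ε) n where
  I := P.I
  fI := P.fI
  deg i := n - P.deg i
  deg_le i := Nat.sub_le _ _
  D i j := MulOpposite.op (P.D j i)
  D_deg i j h := by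
    have h1 : P.D j i ≠ 0 := fun h0 => h (by rw [h0]; rfl)
    have := P.D_deg j i h1
    have := P.deg_le j
    omega
  a := P.b
  b := P.a
  a0 := P.b0
  b0 := P.a0
  a_deg i h := by have := P.b_deg i h; omega
  b_deg i h := by have := P.a_deg i h; omega
  ddL f := by
    have h := P.ddR (fun i => (f i).unop)
    ext j
    apply MulOpposite.unop_injective
    have := congrFun h j
    simpa [mL_apply, mR_apply] using this
  ddR f := by
    have h := P.ddL (fun i => (f i).unop)
    ext j
    apply MulOpposite.unop_injective
    have := congrFun h j
    simpa [mL_apply, mR_apply] using this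
  phL f := by
    have h := P.phR (fun i => (f i).unop)
    rw [ph_apply] at h ⊢
    refine Eq.trans (Finset.sum_congr rfl fun i _ => ?_) h
    congr 1
    change ε (MulOpposite.unop _) = _
    congr 1
    simp [mL_apply, mR_apply]
  phR f := by
    have h := P.phL (fun i => (f i).unop)
    rw [ph_apply] at h ⊢
    refine Eq.trans (Finset.sum_congr rfl fun i _ => ?_) h
    congr 1
    change ε (MulOpposite.unop _) = _
    congr 1
    simp [mL_apply, mR_apply]
  exL f h1 h2 := by
    obtain ⟨g, hg⟩ := P.exR (fun i => (f i).unop) (by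
      ext j
      have := congrArg MulOpposite.unop (congrFun h1 j)
      simpa [mL_apply, mR_apply] using this) h2
    refine ⟨fun i => MulOpposite.op (g i), ?_⟩
    ext j
    apply MulOpposite.unop_injective
    have := congrFun hg j
    simpa [mL_apply, mR_apply] using this
  exR f h1 h2 := by
    obtain ⟨g, hg⟩ := P.exL (fun i => (f i).unop) (by
      ext j
      have := congrArg MulOpposite.unop (congrFun h1 j)
      simpa [mL_apply, mR_apply] using this) h2
    refine ⟨fun i => MulOpposite.op (g i), ?_⟩
    ext j
    apply MulOpposite.unop_injective
    have := congrFun hg j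
    simpa [mL_apply, mR_apply] using this

/-- sign operator -/
noncomputable def sg (P : PDRes ε n) : (P.I → R) →ₗ[k] (P.I → R) where
  toFun f i := (-1 : k) ^ P.deg i • f i
  map_add' f g := by ext; simp
  map_smul' c f := by ext; simp [smul_comm c]

lemma sg_apply (P : PDRes ε n) (f i) : P.sg f i = (-1 : k) ^ P.deg i • f i := rfl

lemma sg_sg (P : PDRes ε n) (f) : P.sg (P.sg f) = f := by
  ext i
  rw [sg_apply, sg_apply, smul_smul, ← mul_pow]
  simp

lemma sg_dL (P : PDRes ε n) (f) : P.sg (mL k P.D f) = - mL k P.D (P.sg f) := by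
  ext j
  simp only [sg_apply, mL_apply, Pi.neg_apply, Finset.smul_sum, ← Finset.sum_neg_distrib]
  refine Finset.sum_congr rfl fun i _ => ?_
  by_cases h : P.D i j = 0
  · simp [h]
  · rw [P.D_deg i j h, pow_succ]
    simp

lemma sg_dR (P : PDRes ε n) (f) : P.sg (mR k P.D f) = - mR k P.D (P.sg f) := by
  ext j
  simp only [sg_apply, mR_apply, Pi.neg_apply, Finset.smul_sum, ← Finset.sum_neg_distrib]
  refine Finset.sum_congr rfl fun i _ => ?_
  by_cases h : P.D j i = 0
  · simp [h]
  · rw [P.D_deg j i h, pow_succ]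
    simp

lemma exists_vL (P : PDRes ε n) : ∃ v, mL k P.D v = 0 ∧ ph ε P.a v = 1 := by
  classical
  obtain ⟨i, hi⟩ := P.a0
  refine ⟨Pi.single i (algebraMap k R (P.a i)⁻¹), ?_, ?_⟩
  · ext j
    rw [mL_apply, Finset.sum_eq_single i]
    · by_cases h : P.D i j = 0
      · simp [h]
      · have := P.D_deg i j h
        rw [P.a_deg i hi] at this
        omega
    · intro l _ hl
      simp [hl]
    · simp
  · rw [ph_apply, Finset.sum_eq_single i]
    · simp [hi]
    · intro l _ hl
      simp [hl]
    · simp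

lemma exists_vR (P : PDRes ε n) : ∃ v, mR k P.D v = 0 ∧ ph ε P.b v = 1 := by
  classical
  obtain ⟨i, hi⟩ := P.b0
  refine ⟨Pi.single i (algebraMap k R (P.b i)⁻¹), ?_, ?_⟩
  · ext j
    rw [mR_apply, Finset.sum_eq_single i]
    · by_cases h : P.D j i = 0
      · simp [h]
      · have := P.D_deg j i h
        rw [P.b_deg i hi] at this
        have := P.deg_le j
        omega
    · intro l _ hl
      simp [hl]
    · simp
  · rw [ph_apply, Finset.sum_eq_single i]
    · simp [hi]
    · intro l _ hl
      simp [hl]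
    · simp

end basic
end PDRes

section Theta
variable (k : Type u) [Field k] (R R' : Type u) [Ring R] [Algebra k R] [Ring R'] [Algebra k R']
  (I I' : Type u) [Fintype I] [Fintype I']

/-- the identification of a tensor product of finite function spaces -/
noncomputable def Th : (I → R) ⊗[k] (I' → R') ≃ₗ[k] (I × I' → R ⊗[k] R') :=
  (TensorProduct.congr (Finsupp.linearEquivFunOnFinite k R I).symm
    (Finsupp.linearEquivFunOnFinite k R' I').symm).trans
  ((finsuppTensorFinsupp k k R R' I I').trans (Finsupp.linearEquivFunOnFinite k _ _))

lemma Th_apply (x : I → R) (y : I' → R') (p : I × I') :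
    Th k R R' I I' (x ⊗ₜ y) p = x p.1 ⊗ₜ y p.2 := by
  obtain ⟨i, j⟩ := p
  simp only [Th, LinearEquiv.trans_apply, TensorProduct.congr_tmul]
  exact finsuppTensorFinsupp_apply k k R R' I I' _ _ i j

end Theta

namespace PDRes
section tensor
variable {k : Type u} [Field k] {R R' : Type u} [Ring R] [Algebra k R] [Ring R'] [Algebra k R']
  {ε : R →ₐ[k] k} {ε' : R' →ₐ[k] k} {n n' : ℕ}

open Classical in
/-- matrix of the tensor product -/
noncomputable def tD (P : PDRes ε n) (P' : PDRes ε' n') (p q : P.I × P'.I) : R ⊗[k] R' :=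
  (if p.2 = q.2 then P.D p.1 q.1 ⊗ₜ 1 else 0) +
    (if p.1 = q.1 then (-1 : k) ^ P.deg p.1 • (1 ⊗ₜ P'.D p.2 q.2) else 0)

lemma tD_L (P : PDRes ε n) (P' : PDRes ε' n') (x) :
    mL k (tD P P') (Th k R R' P.I P'.I x) =
      Th k R R' P.I P'.I (totD (mL k P.D) P.sg (mL k P'.D) x) := by
  classical
  induction x with
  | zero => simp
  | add x y hx hy => simp only [map_add, hx, hy]
  | tmul x y =>
    ext ⟨j, j'⟩
    rw [mL_apply]
    simp only [totD, LinearMap.add_apply, TensorProduct.map_tmul, map_add, Pi.add_apply, Th_apply,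
      LinearMap.id_apply, tD, mul_add, Finset.sum_add_distrib]
    congr 1
    · rw [Fintype.sum_prod_type, mL_apply, TensorProduct.sum_tmul]
      refine Finset.sum_congr rfl fun i _ => ?_
      rw [Finset.sum_eq_single j']
      · simp
      · intro l _ hl
        simp [hl]
      · simp
    · rw [Fintype.sum_prod_type_right, mL_apply, TensorProduct.tmul_sum]
      refine Finset.sum_congr rfl fun i _ => ?_
      rw [Finset.sum_eq_single j]
      · simp [sg_apply, TensorProduct.smul_tmul']
      · intro l _ hl
        simp [hl]
      · simp

lemma tD_R (P : PDRes ε n) (P' : PDRes ε' n') (x) :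
    mR k (tD P P') (Th k R R' P.I P'.I x) =
      Th k R R' P.I P'.I (totD (mR k P.D) P.sg (mR k P'.D) x) := by
  classical
  induction x with
  | zero => simp
  | add x y hx hy => simp only [map_add, hx, hy]
  | tmul x y =>
    ext ⟨j, j'⟩
    rw [mR_apply]
    simp only [totD, LinearMap.add_apply, TensorProduct.map_tmul, map_add, Pi.add_apply, Th_apply,
      LinearMap.id_apply, tD, add_mul, Finset.sum_add_distrib]
    congr 1
    · rw [Fintype.sum_prod_type, mR_apply, TensorProduct.sum_tmul]
      refine Finset.sum_congr rfl fun i _ => ?_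
      rw [Finset.sum_eq_single j']
      · simp
      · intro l _ hl
        simp [hl.symm]
      · simp
    · rw [Fintype.sum_prod_type_right, mR_apply, TensorProduct.tmul_sum]
      refine Finset.sum_congr rfl fun i _ => ?_
      rw [Finset.sum_eq_single j]
      · simp [sg_apply, TensorProduct.smul_tmul']
      · intro l _ hl
        simp [hl.symm]
      · simp

lemma t_ph {I I' : Type u} [Fintype I] [Fintype I'] (a : I → k) (a' : I' → k) (x) :
    ph (Algebra.TensorProduct.productMap ε ε') (fun p : I × I' => a p.1 * a' p.2)
      (Th k R R' I I' x) = totφ (ph ε a) (ph ε' a') x := by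
  induction x with
  | zero => simp
  | add x y hx hy => simp only [map_add, hx, hy]
  | tmul x y =>
    simp only [totφ, ph_apply, Th_apply, Algebra.TensorProduct.productMap_apply_tmul,
      TensorProduct.lift.tmul, LinearMap.compl₁₂_apply, LinearMap.mul_apply']
    rw [Finset.sum_mul_sum, Fintype.sum_prod_type]
    refine Finset.sum_congr rfl fun i _ => Finset.sum_congr rfl fun j _ => ?_
    ring

lemma totD_totD {V V' : Type u} [AddCommGroup V] [Module k V] [AddCommGroup V'] [Module k V']
    (d σ : V →ₗ[k] V) (d' : V' →ₗ[k] V') (hσd : ∀ x, σ (d x) = - d (σ x))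
    (hd : ∀ x, d (d x) = 0) (hd' : ∀ x, d' (d' x) = 0) (x) :
    totD d σ d' (totD d σ d' x) = 0 := by
  induction x with
  | zero => simp
  | add x y hx hy => simp only [map_add, hx, hy, add_zero]
  | tmul x y => simp [totD, hσd, hd, hd', TensorProduct.neg_tmul]

lemma totφ_totD {V V' : Type u} [AddCommGroup V] [Module k V] [AddCommGroup V'] [Module k V']
    (d σ : V →ₗ[k] V) (d' : V' →ₗ[k] V') (φ : V →ₗ[k] k) (φ' : V' →ₗ[k] k)
    (hd : ∀ x, φ (d x) = 0) (hd' : ∀ x, φ' (d' x) = 0) (x) :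
    totφ φ φ' (totD d σ d' x) = 0 := by
  induction x with
  | zero => simp
  | add x y hx hy => simp only [map_add, hx, hy, add_zero]
  | tmul x y => simp [totD, totφ, hd, hd']

/-- tensor product -/
noncomputable def tensor (P : PDRes ε n) (P' : PDRes ε' n') :
    PDRes (Algebra.TensorProduct.productMap ε ε') (n + n') where
  I := P.I × P'.I
  fI := inferInstance
  deg p := P.deg p.1 + P'.deg p.2
  deg_le p := add_le_add (P.deg_le _) (P'.deg_le _)
  D := tD P P'
  D_deg p q h := by
    classical
    by_contra hne
    apply h
    unfold tD
    have h1 : (if p.2 = q.2 then P.D p.1 q.1 ⊗ₜ[k] (1 : R') else 0) = 0 := by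
      split_ifs with h2
      · by_cases h3 : P.D p.1 q.1 = 0
        · simp [h3]
        · exact absurd (by rw [P.D_deg _ _ h3, h2]; omega) hne
      · rfl
    have h1' : (if p.1 = q.1 then (-1 : k) ^ P.deg p.1 • ((1 : R) ⊗ₜ[k] P'.D p.2 q.2) else 0)
        = 0 := by
      split_ifs with h2
      · by_cases h3 : P'.D p.2 q.2 = 0
        · simp [h3]
        · exact absurd (by rw [P'.D_deg _ _ h3, h2]; omega) hne
      · rfl
    convert add_zero (0 : R ⊗[k] R') using 2
  a p := P.a p.1 * P'.a p.2
  b p := P.b p.1 * P'.b p.2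
  a0 := by
    obtain ⟨i, hi⟩ := P.a0
    obtain ⟨j, hj⟩ := P'.a0
    exact ⟨(i, j), mul_ne_zero hi hj⟩
  b0 := by
    obtain ⟨i, hi⟩ := P.b0
    obtain ⟨j, hj⟩ := P'.b0
    exact ⟨(i, j), mul_ne_zero hi hj⟩
  a_deg p h := by
    rw [P.a_deg _ (left_ne_zero_of_mul h), P'.a_deg _ (right_ne_zero_of_mul h)]
  b_deg p h := by
    rw [P.b_deg _ (left_ne_zero_of_mul h), P'.b_deg _ (right_ne_zero_of_mul h)]
  ddL f := by
    obtain ⟨x, rfl⟩ := (Th k R R' P.I P'.I).surjective f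
    rw [tD_L, tD_L, totD_totD _ _ _ P.sg_dL P.ddL P'.ddL, map_zero]
  ddR f := by
    obtain ⟨x, rfl⟩ := (Th k R R' P.I P'.I).surjective f
    rw [tD_R, tD_R, totD_totD _ _ _ P.sg_dR P.ddR P'.ddR, map_zero]
  phL f := by
    obtain ⟨x, rfl⟩ := (Th k R R' P.I P'.I).surjective f
    rw [tD_L, t_ph, totφ_totD _ _ _ _ _ P.phL P'.phL]
  phR f := by
    obtain ⟨x, rfl⟩ := (Th k R R' P.I P'.I).surjective f
    rw [tD_R, t_ph, totφ_totD _ _ _ _ _ P.phR P'.phR]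
  exL f h1 h2 := by
    obtain ⟨x, rfl⟩ := (Th k R R' P.I P'.I).surjective f
    rw [tD_L, LinearEquiv.map_eq_zero_iff] at h1
    rw [t_ph] at h2
    obtain ⟨v, hv1, hv2⟩ := P'.exists_vL
    obtain ⟨z, hz⟩ := kunneth _ _ _ P.sg_sg P.sg_dL P.exL _ _ v P'.ddL P'.phL hv1 hv2 P'.exL
      x h1 h2
    exact ⟨Th k R R' P.I P'.I z, by rw [tD_L, ← hz]⟩
  exR f h1 h2 := by
    obtain ⟨x, rfl⟩ := (Th k R R' P.I P'.I).surjective f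
    rw [tD_R, LinearEquiv.map_eq_zero_iff] at h1
    rw [t_ph] at h2
    obtain ⟨v, hv1, hv2⟩ := P'.exists_vR
    obtain ⟨z, hz⟩ := kunneth _ _ _ P.sg_sg P.sg_dR P.exR _ _ v P'.ddR P'.phR hv1 hv2 P'.exR
      x h1 h2
    exact ⟨Th k R R' P.I P'.I z, by rw [tD_R, ← hz]⟩

end tensor
end PDRes
end ASR

namespace ASR
namespace PDRes
variable {k : Type u} [Field k] {R : Type u} [Ring R] [Algebra k R] {ε : R →ₐ[k] k} {n : ℕ}

/-- vectors supported in degree m -/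
def Sub (P : PDRes ε n) (m : ℕ) : Submodule R (P.I → R) where
  carrier := {f | ∀ i, P.deg i ≠ m → f i = 0}
  add_mem' {f g} hf hg i hi := by
    change f i + g i = 0
    rw [hf i hi, hg i hi, add_zero]
  zero_mem' i hi := rfl
  smul_mem' c f hf i hi := by
    change c * f i = 0
    rw [hf i hi, mul_zero]

/-- the projection to degree m -/
noncomputable def prj (P : PDRes ε n) (m : ℕ) : (P.I → R) →ₗ[R] P.Sub m where
  toFun f := ⟨fun i => if P.deg i = m then f i else 0, fun i hi => if_neg hi⟩
  map_add' f g := by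
    apply Subtype.ext
    ext i
    by_cases h : P.deg i = m <;> simp [h]
  map_smul' c f := by
    apply Subtype.ext
    ext i
    by_cases h : P.deg i = m <;> simp [h]

lemma prj_apply (P : PDRes ε n) (m : ℕ) (f i) :
    (P.prj m f).1 i = if P.deg i = m then f i else 0 := rfl

lemma prj_self (P : PDRes ε n) (m : ℕ) (f : P.Sub m) : P.prj m f.1 = f := by
  apply Subtype.ext
  ext i
  rw [prj_apply]
  split_ifs with h
  · rfl
  · exact (f.2 i h).symm

lemma sub_proj (P : PDRes ε n) (m : ℕ) : Module.Projective R (P.Sub m) :=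
  Module.Projective.of_split (P.Sub m).subtype (P.prj m) (LinearMap.ext (P.prj_self m))

lemma prj_dL (P : PDRes ε n) (m : ℕ) (f) :
    (P.prj m (mL k P.D f)).1 = mL k P.D (P.prj (m + 1) f).1 := by
  ext j
  rw [prj_apply, mL_apply, mL_apply]
  split_ifs with h
  · refine Finset.sum_congr rfl fun i _ => ?_
    rw [prj_apply]
    split_ifs with h1
    · rfl
    · by_cases h2 : P.D i j = 0
      · simp [h2]
      · exact absurd (by rw [P.D_deg i j h2, h]) h1
  · symm
    refine Finset.sum_eq_zero fun i _ => ?_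
    rw [prj_apply]
    split_ifs with h1
    · by_cases h2 : P.D i j = 0
      · simp [h2]
      · have := P.D_deg i j h2
        omega
    · simp

lemma dL_mem (P : PDRes ε n) (m : ℕ) (f : P.Sub (m + 1)) : mL k P.D f.1 ∈ P.Sub m := by
  have := P.prj_dL m f.1
  rw [prj_self] at this
  rw [← this]
  exact (P.prj m _).2

lemma dL_zero (P : PDRes ε n) (f : P.Sub 0) : mL k P.D f.1 = 0 := by
  ext j
  refine Finset.sum_eq_zero fun i _ => ?_
  by_cases h : P.deg i = 0
  · by_cases h2 : P.D i j = 0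
    · simp [h2]
    · have := P.D_deg i j h2
      omega
  · rw [f.2 i h, zero_mul]

lemma ph_succ (P : PDRes ε n) (m : ℕ) (f : P.Sub (m + 1)) : ph ε P.a f.1 = 0 := by
  refine Finset.sum_eq_zero fun i _ => ?_
  by_cases h : P.a i = 0
  · simp [h]
  · rw [f.2 i (by rw [P.a_deg i h]; omega), map_zero, zero_mul]

variable [Module R k] (hk : ∀ (r : R) (c : k), r • c = ε r * c)

/-- the resolution -/
noncomputable def res (P : PDRes ε n) : XRes R k where
  X m := ModuleCat.of R (P.Sub m)
  d m :=
    { toFun := fun f => ⟨mL k P.D f.1, P.dL_mem m f⟩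
      map_add' := fun f g => Subtype.ext (map_add (mL k P.D) f.1 g.1)
      map_smul' := fun c f => Subtype.ext (by
        ext j
        change ∑ i, (c * f.1 i) * P.D i j = c * ∑ i, f.1 i * P.D i j
        simp only [mul_assoc, Finset.mul_sum]) }
  aug :=
    { toFun := fun f => ph ε P.a f.1
      map_add' := fun f g => map_add (ph ε P.a) f.1 g.1
      map_smul' := fun c f => by
        change ∑ i, ε (c * f.1 i) * P.a i = c • ∑ i, ε (f.1 i) * P.a i
        rw [hk]
        simp only [map_mul, mul_assoc, Finset.mul_sum] }
  aug_surj c := by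
    obtain ⟨v, hv1, hv2⟩ := P.exists_vL
    refine ⟨P.prj 0 (c • v), ?_⟩
    have : ph ε P.a (P.prj 0 (c • v)).1 = ph ε P.a (c • v) := by
      refine Finset.sum_congr rfl fun i _ => ?_
      rw [prj_apply]
      split_ifs with h
      · rfl
      · by_cases h2 : P.a i = 0
        · simp [h2]
        · exact absurd (P.a_deg i h2) h
    refine this.trans ?_
    rw [map_smul, hv2]
    simp
  exact0 x := by
    constructor
    · intro h
      obtain ⟨g, hg⟩ := P.exL x.1 (P.dL_zero x) h
      refine ⟨P.prj 1 g, ?_⟩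
      have := P.prj_dL 0 g
      rw [← hg, prj_self] at this
      exact Subtype.ext this.symm
    · rintro ⟨y, rfl⟩
      exact P.phL y.1
  exact m x := by
    constructor
    · intro h
      obtain ⟨g, hg⟩ := P.exL x.1 (congrArg Subtype.val h) (P.ph_succ m x)
      refine ⟨P.prj (m + 2) g, ?_⟩
      have := P.prj_dL (m + 1) g
      rw [← hg, prj_self] at this
      exact Subtype.ext this.symm
    · rintro ⟨y, rfl⟩
      exact Subtype.ext (P.ddL y.1)

lemma res_proj (P : PDRes ε n) (m : ℕ) : Module.Projective R ((P.res hk).X m) := P.sub_proj m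

lemma res_zero (P : PDRes ε n) (m : ℕ) (hm : n < m) : Subsingleton ((P.res hk).X m) := by
  refine ⟨fun f g => Subtype.ext (funext fun i => ?_)⟩
  have := P.deg_le i
  rw [f.2 i (by omega), g.2 i (by omega)]

lemma projDim_le (hk : ∀ (r : R) (c : k), r • c = ε r * c) (P : PDRes ε n) : (ModuleCat.of R k).projDim ≤ n :=
  projDim_le_of_res (P.res hk) (P.res_proj hk) (P.res_zero hk)

/-- functional from a column -/
noncomputable def ofCol (P : PDRes ε n) (m : ℕ) (g : P.I → R) : P.Sub m →ₗ[R] R where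
  toFun f := ∑ i, f.1 i * g i
  map_add' f f' := by simp [add_mul, Finset.sum_add_distrib]
  map_smul' c f := by simp [mul_assoc, Finset.mul_sum]

open Classical in
/-- column from a functional -/
noncomputable def toCol (P : PDRes ε n) (m : ℕ) (h : P.Sub m →ₗ[R] R) (i : P.I) : R :=
  h (P.prj m (Pi.single i 1))

lemma toCol_ne (P : PDRes ε n) (m : ℕ) (h : P.Sub m →ₗ[R] R) (i : P.I) (hi : P.deg i ≠ m) :
    P.toCol m h i = 0 := by
  classical
  unfold toCol
  have : P.prj m (Pi.single i 1) = 0 := by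
    apply Subtype.ext
    ext j
    rw [prj_apply]
    split_ifs with h1
    · have : j ≠ i := by rintro rfl; exact hi h1
      simp [this]
    · rfl
  convert map_zero h

lemma ofCol_toCol (P : PDRes ε n) (m : ℕ) (h : P.Sub m →ₗ[R] R) :
    P.ofCol m (P.toCol m h) = h := by
  classical
  ext f
  conv_rhs => rw [← P.prj_self m f]
  have e : f.1 = ∑ i, f.1 i • (Pi.single i 1 : P.I → R) := by
    ext j
    simp [Finset.sum_apply, Pi.single_apply]
  conv_rhs => rw [e]
  rw [map_sum, map_sum]
  refine Finset.sum_congr rfl fun i _ => ?_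
  rw [map_smul, map_smul]
  simp only [smul_eq_mul, toCol]

lemma toCol_ofCol (P : PDRes ε n) (m : ℕ) (g : P.I → R) (i : P.I) (hi : P.deg i = m) :
    P.toCol m (P.ofCol m g) i = g i := by
  classical
  change ∑ j, (P.prj m (Pi.single i 1)).1 j * g j = g i
  rw [Finset.sum_eq_single i]
  · simp [prj_apply, hi]
  · intro j _ hj
    simp [prj_apply, hj]
  · simp

lemma ofCol_d (P : PDRes ε n) (m : ℕ) (g : P.I → R) (f : P.Sub (m + 1)) :
    P.ofCol m g ⟨mL k P.D f.1, P.dL_mem m f⟩ = P.ofCol (m + 1) (mR k P.D g) f := by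
  change ∑ j, (∑ i, f.1 i * P.D i j) * g j = ∑ i, f.1 i * ∑ j, P.D i j * g j
  simp only [Finset.sum_mul, Finset.mul_sum, mul_assoc]
  exact Finset.sum_comm

lemma mR_deg (P : PDRes ε n) (m : ℕ) (g : P.I → R) (hg : ∀ i, P.deg i ≠ m → g i = 0) (i : P.I)
    (hi : P.deg i ≠ m + 1) : mR k P.D g i = 0 := by
  refine Finset.sum_eq_zero fun j _ => ?_
  by_cases h : P.D i j = 0
  · simp [h]
  · rw [hg j (by have := P.D_deg i j h; omega), mul_zero]

lemma cocycle (P : PDRes ε n) (m : ℕ) (h : P.Sub m →ₗ[R] R)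
    (hh : h ∘ₗ (P.res hk).d m = 0) : mR k P.D (P.toCol m h) = 0 := by
  ext i
  by_cases hi : P.deg i = m + 1
  · rw [← P.toCol_ofCol (m + 1) (mR k P.D (P.toCol m h)) i hi]
    have : P.ofCol (m + 1) (mR k P.D (P.toCol m h)) = 0 := by
      ext f
      rw [← ofCol_d, ofCol_toCol]
      exact LinearMap.congr_fun hh f
    rw [this]
    rfl
  · exact P.mR_deg m _ (P.toCol_ne m h) i hi

lemma bdry (P : PDRes ε n) (m : ℕ) (h : P.Sub m →ₗ[R] R) (g : P.I → R)
    (hg : P.toCol m h = mR k P.D g) : (P.res hk).Bdry m h := by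
  have e := P.ofCol_toCol m h
  cases m with
  | zero =>
    change h = 0
    rw [← e]
    have : P.toCol 0 h = 0 := by
      ext i
      by_cases hi : P.deg i = 0
      · rw [hg]
        refine Finset.sum_eq_zero fun j _ => ?_
        by_cases h2 : P.D i j = 0
        · simp [h2]
        · have := P.D_deg i j h2
          omega
      · exact P.toCol_ne 0 h i hi
    rw [this]
    ext f
    exact Finset.sum_eq_zero fun j _ => mul_zero _
  | succ m =>
    refine ⟨P.ofCol m g, ?_⟩
    rw [← e]
    ext f
    rw [hg]
    exact (P.ofCol_d m g f).symm

lemma bdry_ph (P : PDRes ε n) (h : P.Sub n →ₗ[R] R) (hb : (P.res hk).Bdry n h) :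
    ph ε P.b (P.toCol n h) = 0 := by
  obtain ⟨g, hg⟩ : ∃ g, ∀ i, P.deg i = n → P.toCol n h i = mR k P.D g i := by
    revert h
    cases n with
    | zero =>
      intro h hb
      refine ⟨0, fun i _ => ?_⟩
      have : h = 0 := hb
      rw [this, map_zero]
      rfl
    | succ m =>
      rintro h ⟨g, rfl⟩
      refine ⟨P.toCol m g, fun i hi => ?_⟩
      rw [← P.toCol_ofCol (m + 1) (mR k P.D (P.toCol m g)) i hi]
      congr 1
      ext f
      exact (LinearMap.congr_fun (P.ofCol_toCol m g) _).symm.trans (P.ofCol_d m (P.toCol m g) f)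
  rw [← P.phR g]
  refine Finset.sum_congr rfl fun i _ => ?_
  by_cases h2 : P.b i = 0
  · simp [h2]
  · rw [hg i (P.b_deg i h2)]

lemma ext_ne (hk : ∀ (r : R) (c : k), r • c = ε r * c) (P : PDRes ε n) (m : ℕ) (hm : m ≠ n) :
    Subsingleton (extGroup k R (ModuleCat.of R k) (ModuleCat.of R R) m) := by
  rw [XRes.ext_subsingleton (P.res hk) (P.res_proj hk)]
  intro h hh
  obtain ⟨g, hg⟩ := P.exR (P.toCol m h) (P.cocycle hk m h hh) (by
    refine Finset.sum_eq_zero fun i _ => ?_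
    by_cases h2 : P.b i = 0
    · simp [h2]
    · rw [P.toCol_ne m h i (by rw [P.b_deg i h2]; exact hm.symm), map_zero, zero_mul])
  exact P.bdry hk m h g hg

lemma ext_eq (hk : ∀ (r : R) (c : k), r • c = ε r * c) (P : PDRes ε n) :
    Nonempty (extGroup k R (ModuleCat.of R k) (ModuleCat.of R R) n ≃ₗ[k] k) := by
  rw [XRes.ext_one (P.res hk) (P.res_proj hk)]
  obtain ⟨v, hv1, hv2⟩ := P.exists_vR
  have hph : ph ε P.b (P.toCol n (P.ofCol n v)) = 1 := by
    rw [← hv2]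
    refine Finset.sum_congr rfl fun i _ => ?_
    by_cases h2 : P.b i = 0
    · simp [h2]
    · rw [P.toCol_ofCol n v i (P.b_deg i h2)]
  refine ⟨P.ofCol n v, ?_, ?_, ?_⟩
  · ext f
    refine (P.ofCol_d n v f).trans ?_
    rw [hv1]
    exact Finset.sum_eq_zero fun j _ => mul_zero _
  · intro hb
    rw [P.bdry_ph hk _ hb] at hph
    exact zero_ne_one hph
  · intro (h : P.Sub n →ₗ[R] R) hh
    refine ⟨ph ε P.b (P.toCol n h), ?_⟩
    have hc := P.cocycle hk n h hh
    have hc2 := P.cocycle hk n (P.ofCol n v) (by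
      ext f
      refine (P.ofCol_d n v f).trans ?_
      rw [hv1]
      exact Finset.sum_eq_zero fun j _ => mul_zero _)
    set c := ph ε P.b (P.toCol n h)
    have e : P.toCol n (h - c • P.ofCol n v) = P.toCol n h - c • P.toCol n (P.ofCol n v) := by
      ext i
      rfl
    obtain ⟨g, hg⟩ := P.exR (P.toCol n (h - c • P.ofCol n v))
      (by rw [e, map_sub, map_smul, hc, hc2]; simp)
      (by rw [e, map_sub, map_smul, hph]; simp [c])
    exact P.bdry hk n _ g hg

end PDRes
end ASR

namespace ASR

/-- minimal free resolution of the trivial module -/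
structure MFR {k : Type u} [Field k] {R : Type u} [Ring R] [Algebra k R] (ε : R →ₐ[k] k)
    [Module R k] where
  I : ℕ → Type u
  δ : ∀ i, (I (i + 1) →₀ R) →ₗ[R] (I i →₀ R)
  aug : (I 0 →₀ R) →ₗ[R] k
  aug_surj : Function.Surjective aug
  exact0 : ∀ x, aug x = 0 ↔ ∃ y, δ 0 y = x
  exact : ∀ i x, δ i x = 0 ↔ ∃ y, δ (i + 1) y = x
  min : ∀ i x l, ε (δ i x l) = 0

namespace MFR
variable {k : Type u} [Field k] {R : Type u} [Ring R] [Algebra k R] {ε : R →ₐ[k] k}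
  [Module R k] (hk : ∀ (r : R) (c : k), r • c = ε r * c)

/-- as a resolution -/
noncomputable def toXRes (F : MFR ε) : XRes R k where
  X i := ModuleCat.of R (F.I i →₀ R)
  d := F.δ
  aug := F.aug
  aug_surj := F.aug_surj
  exact0 := F.exact0
  exact := F.exact

lemma toXRes_proj (F : MFR ε) (i : ℕ) : Module.Projective R (F.toXRes.X i) :=
  inferInstanceAs (Module.Projective R (F.I i →₀ R))

lemma g_min (hk : ∀ (r : R) (c : k), r • c = ε r * c) (F : MFR ε) (i : ℕ) (g : (F.I i →₀ R) →ₗ[R] k) (x) : g (F.δ i x) = 0 := by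
  have : g (F.δ i x) = (F.δ i x).sum fun l r => r • g (Finsupp.single l 1) := by
    conv_lhs => rw [← Finsupp.sum_single (F.δ i x)]
    rw [map_finsuppSum]
    refine Finsupp.sum_congr fun l _ => ?_
    rw [← map_smul]
    simp
  rw [this]
  refine Finset.sum_eq_zero fun l _ => ?_
  simp only [hk, F.min, zero_mul]

/-- `ε` as a linear map -/
noncomputable def epsL : R →ₗ[R] k where
  toFun := ε
  map_add' := map_add ε
  map_smul' r s := by simp [hk]

lemma R_min (hk : ∀ (r : R) (c : k), r • c = ε r * c) (F : MFR ε) (i : ℕ) (g : (F.I i →₀ R) →ₗ[R] R) (x) : ε (g (F.δ i x)) = 0 :=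
  F.g_min hk i (epsL hk ∘ₗ g) x

lemma bdry_min (hk : ∀ (r : R) (c : k), r • c = ε r * c) (F : MFR ε) (i : ℕ) (f : (F.I i →₀ R) →ₗ[R] R) (hf : F.toXRes.Bdry i f) (l) :
    ε (f (Finsupp.single l 1)) = 0 := by
  cases i with
  | zero =>
    have : f = 0 := hf
    rw [this]
    exact map_zero ε
  | succ i =>
    obtain ⟨g, rfl⟩ := hf
    exact F.R_min hk i g _

lemma isEmpty (hk : ∀ (r : R) (c : k), r • c = ε r * c) (F : MFR ε) (n : ℕ) (hpd : (ModuleCat.of R k).projDim ≤ n) (i : ℕ) (hi : n < i) :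
    IsEmpty (F.I i) := by
  refine ⟨fun l => ?_⟩
  have h1 := ext_vanish k (ModuleCat.of R k) (ModuleCat.of R k) i
    (lt_of_le_of_lt hpd (by exact_mod_cast hi))
  rw [XRes.ext_subsingleton F.toXRes F.toXRes_proj] at h1
  let f : (F.I i →₀ R) →ₗ[R] k := epsL hk ∘ₗ Finsupp.lapply l
  have h2 := h1 f (LinearMap.ext fun x => F.min i x l)
  have h3 : f (Finsupp.single l 1) = 1 := by simp [f, epsL]
  cases i with
  | zero => omega
  | succ i =>
    obtain ⟨g, hg⟩ := h2
    have h4 : f (Finsupp.single l 1) = 0 := by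
      rw [hg]
      exact F.g_min hk i g _
    rw [h4] at h3
    exact zero_ne_one h3

/-- hypotheses on Ext -/
structure Hyp (F : MFR ε) (n : ℕ) : Prop where
  pd : (ModuleCat.of R k).projDim ≤ n
  ne : ∀ i, i ≠ n → Subsingleton (extGroup k R (ModuleCat.of R k) (ModuleCat.of R R) i)
  eq : Nonempty (extGroup k R (ModuleCat.of R k) (ModuleCat.of R R) n ≃ₗ[k] k)

lemma top (hk : ∀ (r : R) (c : k), r • c = ε r * c) (F : MFR ε) (n : ℕ) (H : F.Hyp n) : ∃ l0 : F.I n, (∀ l, l = l0) ∧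
    ∀ f : (F.I n →₀ R) →ₗ[R] R, ε (f (Finsupp.single l0 1)) = 0 → F.toXRes.Bdry n f := by
  have h1 := H.eq
  rw [XRes.ext_one F.toXRes F.toXRes_proj] at h1
  have hE := F.isEmpty hk n H.pd (n + 1) (by omega)
  have hcoc : ∀ f : (F.I n →₀ R) →ₗ[R] R, f ∘ₗ F.δ n = 0 := fun f => by
    ext l
    exact hE.elim l
  obtain ⟨f0, -, h2, h3⟩ := h1
  change (F.I n →₀ R) →ₗ[R] R at f0
  have h4 : ∀ f : (F.I n →₀ R) →ₗ[R] R, ∃ c : k, F.toXRes.Bdry n (f - c • f0) :=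
    fun f => h3 f (hcoc f)
  have h5 : ∀ l, ε (f0 (Finsupp.single l 1)) ≠ 0 ∧ ∀ l', l' ≠ l →
      ε (f0 (Finsupp.single l' 1)) = 0 := by
    intro l
    obtain ⟨c, hc⟩ := h4 (Finsupp.lapply l)
    have h6 := F.bdry_min hk n _ hc
    have h7 := h6 l
    simp only [LinearMap.sub_apply, LinearMap.smul_apply, Finsupp.lapply_apply,
      Finsupp.single_eq_same, map_sub, map_one, map_smul, smul_eq_mul] at h7
    have hc0 : c ≠ 0 := by
      rintro rfl
      simp at h7
    refine ⟨fun h0 => by simp [h0] at h7, fun l' hl' => ?_⟩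
    have h8 := h6 l'
    rw [LinearMap.sub_apply, LinearMap.smul_apply, Finsupp.lapply_apply,
      Finsupp.single_eq_of_ne hl'.symm, map_sub, map_zero, map_smul, zero_sub,
      neg_eq_zero, smul_eq_mul, mul_eq_zero] at h8
    exact h8.resolve_left hc0
  have hne : Nonempty (F.I n) := by
    by_contra h
    rw [not_nonempty_iff] at h
    apply h2
    have e : f0 = 0 := by
      ext l
      exact h.elim l
    rw [e]
    cases n with
    | zero => rfl
    | succ n => exact ⟨0, (LinearMap.zero_comp _).symm⟩
  obtain ⟨l0⟩ := hne
  refine ⟨l0, fun l => ?_, fun f hf => ?_⟩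
  · by_contra h
    exact (h5 l).1 ((h5 l0).2 l h)
  · obtain ⟨c, hc⟩ := h4 f
    have h6 := F.bdry_min hk n _ hc l0
    simp only [LinearMap.sub_apply, LinearMap.smul_apply, map_sub, map_smul, smul_eq_mul,
      hf, zero_sub, neg_eq_zero, mul_eq_zero, (h5 l0).1, or_false] at h6
    rw [h6] at hc
    have e : f - (0 : k) • f0 = f := by
      ext
      simp
    exact e ▸ hc

lemma finite (hk : ∀ (r : R) (c : k), r • c = ε r * c) (F : MFR ε) (n : ℕ) (H : F.Hyp n) (i : ℕ) : Finite (F.I i) := by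
  classical
  by_cases hi : n < i
  · have := F.isEmpty hk n H.pd i hi
    infer_instance
  obtain ⟨j, rfl⟩ : ∃ j, n = i + j := ⟨n - i, by omega⟩
  clear hi
  have key : ∀ j m, m + j = i + j → True := fun _ _ _ => trivial
  suffices h : ∀ j' i', i + j = i' + j' → Finite (F.I i') from h j i rfl
  intro j'
  induction j' with
  | zero =>
    intro i' e
    obtain ⟨l0, h0, -⟩ := F.top hk _ H
    have e' : i + j = i' := e
    rw [← e']
    have : Subsingleton (F.I (i + j)) := ⟨fun a b => (h0 a).trans (h0 b).symm⟩
    infer_instance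
  | succ j' ih =>
    intro i' e
    have hfin := ih (i' + 1) (by omega)
    cases nonempty_fintype (F.I (i' + 1))
    let S : Finset (F.I i') := Finset.univ.biUnion fun j : F.I (i' + 1) =>
      (F.δ i' (Finsupp.single j 1)).support
    have hS : ∀ l, l ∈ S := by
      intro l
      by_contra hl
      have h1 := H.ne i' (by omega)
      rw [XRes.ext_subsingleton F.toXRes F.toXRes_proj] at h1
      have h2 := h1 (Finsupp.lapply l : (F.I i' →₀ R) →ₗ[R] R) (by
        change (Finsupp.lapply l : (F.I i' →₀ R) →ₗ[R] R) ∘ₗ F.δ i' = 0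
        ext j
        by_contra h3
        exact hl (Finset.mem_biUnion.2 ⟨j, Finset.mem_univ _, Finsupp.mem_support_iff.2 h3⟩))
      have h3 := F.bdry_min hk i' _ h2 l
      simp at h3
    have : Fintype (F.I i') := ⟨S, hS⟩
    infer_instance

/-- total index set -/
abbrev Tot (F : MFR ε) : Type u := Σ i, F.I i

/-- rows -/
noncomputable def row (F : MFR ε) : F.Tot → (F.Tot →₀ R)
  | ⟨0, _⟩ => 0
  | ⟨i + 1, j⟩ => (F.δ i (Finsupp.single j 1)).mapDomain (Sigma.mk i)

lemma row_same (F : MFR ε) (i j l) :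
    F.row ⟨i + 1, j⟩ ⟨i, l⟩ = F.δ i (Finsupp.single j 1) l :=
  Finsupp.mapDomain_apply sigma_mk_injective _ _

lemma row_deg (F : MFR ε) (p q : F.Tot) (h : F.row p q ≠ 0) : p.1 = q.1 + 1 := by
  obtain ⟨_ | i, j⟩ := p
  · exact absurd rfl h
  · by_contra hne
    apply h
    refine Finsupp.mapDomain_of_notMem_range _ _ ?_
    rintro ⟨l, rfl⟩
    exact hne rfl

section
variable (F : MFR ε) [∀ i, Fintype (F.I i)] [Fintype F.Tot]

lemma sum_tot {M : Type u} [AddCommMonoid M] (i : ℕ) (f : F.Tot → M) (h : ∀ p, p.1 ≠ i → f p = 0) :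
    ∑ p, f p = ∑ l, f ⟨i, l⟩ := by
  symm
  refine Fintype.sum_of_injective (Sigma.mk i) sigma_mk_injective _ _ ?_ (fun _ => rfl)
  rintro ⟨i', l⟩ hp
  apply h
  rintro rfl
  exact hp ⟨l, rfl⟩

/-- restriction to a degree -/
noncomputable def rs (f : F.Tot → R) (i : ℕ) : F.I i →₀ R :=
  Finsupp.equivFunOnFinite.symm fun l => f ⟨i, l⟩

lemma rs_apply (f : F.Tot → R) (i : ℕ) (l) : F.rs f i l = f ⟨i, l⟩ := rfl

lemma lin_sum {N : Type u} [AddCommGroup N] [Module R N] {J : Type u} [Fintype J]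
    (g : (J →₀ R) →ₗ[R] N) (x : J →₀ R) : g x = ∑ j, x j • g (Finsupp.single j 1) := by
  classical
  have : x = ∑ j, x j • Finsupp.single j (1 : R) := by
    ext l
    simp [Finsupp.single_apply]
  conv_lhs => rw [this]
  rw [map_sum]
  exact Finset.sum_congr rfl fun j _ => map_smul g _ _

lemma keyL (f : F.Tot → R) (i : ℕ) (l) :
    mL k (fun p q => F.row p q) f ⟨i, l⟩ = F.δ i (F.rs f (i + 1)) l := by
  rw [mL_apply, F.sum_tot (i + 1)]
  · have := lin_sum (Finsupp.lapply l ∘ₗ F.δ i) (F.rs f (i + 1))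
    refine Eq.trans ?_ this.symm
    refine Finset.sum_congr rfl fun j _ => ?_
    rw [row_same]
    rfl
  · intro p hp
    by_cases h : F.row p ⟨i, l⟩ = 0
    · rw [h, mul_zero]
    · exact absurd (F.row_deg _ _ h) hp

/-- functional from a column -/
noncomputable def fc (g : F.Tot → R) (i : ℕ) : (F.I i →₀ R) →ₗ[R] R :=
  Finsupp.linearCombination R fun l => g ⟨i, l⟩

lemma fc_single (g : F.Tot → R) (i : ℕ) (l) : F.fc g i (Finsupp.single l 1) = g ⟨i, l⟩ := by
  simp [fc]

lemma keyR (g : F.Tot → R) (i : ℕ) (j) :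
    mR k (fun p q => F.row p q) g ⟨i + 1, j⟩ = F.fc g i (F.δ i (Finsupp.single j 1)) := by
  rw [mR_apply, F.sum_tot i]
  · rw [lin_sum]
    refine Finset.sum_congr rfl fun l _ => ?_
    rw [row_same, fc_single]
    rfl
  · intro p hp
    by_cases h : F.row ⟨i + 1, j⟩ p = 0
    · rw [h, zero_mul]
    · exact absurd (Nat.succ_injective (F.row_deg _ _ h)).symm hp

lemma keyR0 (g : F.Tot → R) (j) :
    mR k (fun p q => F.row p q) g ⟨0, j⟩ = 0 := by
  refine Finset.sum_eq_zero fun p _ => ?_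
  exact zero_mul _

lemma fc_mR (g : F.Tot → R) (i : ℕ) :
    F.fc (mR k (fun p q => F.row p q) g) (i + 1) = F.fc g i ∘ₗ F.δ i := by
  ext j
  simp only [LinearMap.comp_apply, Finsupp.lsingle_apply]
  rw [fc_single, keyR]

end

/-- value of the augmentation on generators -/
noncomputable def av (F : MFR ε) : F.Tot → k
  | ⟨0, l⟩ => F.aug (Finsupp.single l 1)
  | ⟨_ + 1, _⟩ => 0

/-- splicing -/
def sp (F : MFR ε) (g : ∀ i, F.I (i + 1) →₀ R) : F.Tot → R
  | ⟨0, _⟩ => 0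
  | ⟨i + 1, l⟩ => g i l

lemma toPDRes (hk : ∀ (r : R) (c : k), r • c = ε r * c) (F : MFR ε) (n : ℕ) (H : F.Hyp n) : Nonempty (PDRes ε n) := by
  classical
  have hfin := F.finite hk n H
  have hem := F.isEmpty hk n H.pd
  have : Finite F.Tot := by
    have : Function.Injective (fun p : F.Tot =>
        (⟨⟨p.1, by
          by_contra h
          exact (hem p.1 (by omega)).elim p.2⟩, p.2⟩ : Σ i : Fin (n + 1), F.I i)) := by
      rintro ⟨i, l⟩ ⟨i', l'⟩ h
      simp only [Sigma.mk.injEq, Fin.mk.injEq] at h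
      obtain ⟨rfl, h⟩ := h
      rw [eq_of_heq h]
    exact Finite.of_injective _ this
  cases nonempty_fintype F.Tot
  have fI : ∀ i, Fintype (F.I i) := fun i => Fintype.ofFinite _
  obtain ⟨l0, hl0, htop⟩ := F.top hk n H
  have hph : ∀ f : F.Tot → R, ph ε F.av f = F.aug (F.rs f 0) := by
    intro f
    rw [ph_apply, F.sum_tot 0, lin_sum]
    · refine Finset.sum_congr rfl fun l _ => ?_
      rw [hk]
      rfl
    · rintro ⟨_ | i, l⟩ h
      · exact absurd rfl h
      · exact mul_zero _
  have hb : ∀ f : F.Tot → R, ph ε (fun p => if p.1 = n then (1 : k) else 0) f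
      = ε (f ⟨n, l0⟩) := by
    intro f
    rw [ph_apply, F.sum_tot n, Finset.sum_eq_single l0]
    · simp
    · intro l _ h
      exact absurd (hl0 l) h
    · simp
    · intro p hp
      simp [hp]
  refine ⟨{
    I := F.Tot
    fI := inferInstance
    deg := Sigma.fst
    deg_le := fun p => ?_
    D := fun p q => F.row p q
    D_deg := F.row_deg
    a := F.av
    b := fun p => if p.1 = n then 1 else 0
    a0 := ?_
    b0 := ⟨⟨n, l0⟩, by simp⟩
    a_deg := ?_
    b_deg := ?_
    ddL := fun f => ?_
    ddR := fun f => ?_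
    phL := fun f => ?_
    phR := fun f => ?_
    exL := fun f h1 h2 => ?_
    exR := fun f h1 h2 => ?_ }⟩
  · by_contra h
    exact (hem p.1 (by omega)).elim p.2
  · by_contra h
    push Not at h
    obtain ⟨x, hx⟩ := F.aug_surj 1
    rw [lin_sum] at hx
    rw [Finset.sum_eq_zero] at hx
    · exact zero_ne_one hx
    · intro l _
      have : F.aug (Finsupp.single l 1) = 0 := h ⟨0, l⟩
      rw [this, smul_zero]
  · rintro ⟨_ | i, l⟩ h
    · rfl
    · exact absurd rfl h
  · intro p h
    by_contra h'
    exact h (if_neg h')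
  · ext ⟨i, l⟩
    rw [keyL]
    have : F.rs (mL k (fun p q => F.row p q) f) (i + 1) = F.δ (i + 1) (F.rs f (i + 2)) := by
      ext l
      rw [rs_apply, keyL]
    rw [this, (F.exact i _).2 ⟨_, rfl⟩]
    rfl
  · ext ⟨_ | _ | i, l⟩
    · exact F.keyR0 _ l
    · rw [keyR]
      have : F.fc (mR k (fun p q => F.row p q) f) 0 = 0 := by
        ext j
        simp only [LinearMap.comp_apply, Finsupp.lsingle_apply]
        rw [fc_single, keyR0]
        rfl
      rw [this]
      rfl
    · rw [keyR, fc_mR, LinearMap.comp_apply, (F.exact i _).2 ⟨_, rfl⟩, map_zero]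
      rfl
  · rw [hph]
    have : F.rs (mL k (fun p q => F.row p q) f) 0 = F.δ 0 (F.rs f 1) := by
      ext l
      rw [rs_apply, keyL]
    rw [this]
    exact (F.exact0 _).2 ⟨_, rfl⟩
  · rw [hb]
    clear hb
    cases n with
    | zero => rw [keyR0, map_zero]
    | succ n => rw [keyR, F.R_min hk]
  · rw [hph] at h2
    have h3 : ∀ i, ∃ y, F.δ i y = F.rs f i := by
      rintro (_ | i)
      · exact (F.exact0 _).1 h2
      · refine (F.exact i _).1 ?_
        ext l
        rw [← keyL, h1]
        rfl
    choose g hg using h3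
    refine ⟨F.sp g, ?_⟩
    ext ⟨i, l⟩
    rw [keyL]
    have : F.rs (F.sp g) (i + 1) = g i := by
      ext l
      rfl
    rw [this, hg]
    rfl
  · rw [hb] at h2
    have h3 : ∀ i, F.toXRes.Bdry i (F.fc f i) := by
      intro i
      by_cases hi : i = n
      · subst hi
        apply htop
        rw [fc_single, h2]
      · have := H.ne i hi
        rw [XRes.ext_subsingleton F.toXRes F.toXRes_proj] at this
        apply this
        change F.fc f i ∘ₗ F.δ i = 0
        rw [← fc_mR, h1]
        ext j
        simp [fc]
    have h4 : ∀ i, ∃ g : (F.I i →₀ R) →ₗ[R] R, F.fc f (i + 1) = g ∘ₗ F.δ i := fun i => h3 (i + 1)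
    choose g hg using h4
    refine ⟨fun p => g p.1 (Finsupp.single p.2 1), ?_⟩
    ext ⟨_ | i, l⟩
    · rw [keyR0, ← F.fc_single f]
      have : F.fc f 0 = 0 := h3 0
      rw [this]
      rfl
    · rw [keyR, ← F.fc_single f, hg, LinearMap.comp_apply]
      congr 1
      ext l
      simp only [LinearMap.comp_apply, Finsupp.lsingle_apply]
      rw [fc_single]

end MFR
end ASR

namespace ASR

/-- connected graded algebra, through its projections -/
structure GrAlg {k : Type u} [Field k] {Λ : Type u} [Ring Λ] [Algebra k Λ] (ε : Λ →ₐ[k] k) where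
  π : ℕ → Λ →ₗ[k] Λ
  g1 : ∀ x, ∃ N, ∑ d ∈ Finset.range N, π d x = x
  g2 : ∀ d x y, π d (x * y) = ∑ a ∈ Finset.range (d + 1), π a x * π (d - a) y
  g3 : ∀ d e x, π d (π e x) = if d = e then π e x else 0
  g4 : ∀ x, π 0 x = algebraMap k Λ (ε x)

variable {k : Type u} [Field k] {Λ : Type u} [Ring Λ] [Algebra k Λ] {ε : Λ →ₐ[k] k}

/-- graded module -/
structure GrMod (G : GrAlg ε) (K : Type u) [AddCommGroup K] [Module Λ K] where
  π : ℕ → K →+ K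
  p1 : ∀ x, ∃ N, ∑ d ∈ Finset.range N, π d x = x
  p2 : ∀ d (r : Λ) x, π d (r • x) = ∑ a ∈ Finset.range (d + 1), G.π a r • π (d - a) x
  p3 : ∀ d e x, π d (π e x) = if d = e then π e x else 0

namespace GrMod
variable {G : GrAlg ε} {K : Type u} [AddCommGroup K] [Module Λ K]

lemma exists_gens [Module k K] [IsScalarTower k Λ K] (g : GrMod G K) :
    ∃ (I : Type u) (deg : I → ℕ) (e : I → K), (∀ i, g.π (deg i) (e i) = e i) ∧
      Function.Surjective (Finsupp.linearCombination Λ e) ∧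
      ∀ f : I →₀ Λ, Finsupp.linearCombination Λ e f = 0 → ∀ i, ε (f i) = 0 := by
  classical
  let N : Submodule k K := Submodule.span k {y | ∃ (r : Λ) (x : K), ε r = 0 ∧ y = r • x}
  let s : Set (K ⧸ N) := {q | ∃ d x, g.π d x = x ∧ N.mkQ x = q}
  obtain ⟨b, hbs, hspan, hli⟩ := exists_linearIndependent k s
  choose deg e he1 he2 using fun i : b => hbs i.2
  have hli' : LinearIndependent k (fun i : b => N.mkQ (e i)) := by
    have : (fun i : b => N.mkQ (e i)) = ((↑) : b → K ⧸ N) := funext he2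
    rw [this]
    exact hli
  have htop : Submodule.span k (Set.range fun i : b => N.mkQ (e i)) = ⊤ := by
    have : (fun i : b => N.mkQ (e i)) = ((↑) : b → K ⧸ N) := funext he2
    rw [this, Subtype.range_coe, hspan, eq_top_iff]
    rintro q -
    obtain ⟨x, rfl⟩ := N.mkQ_surjective q
    obtain ⟨M, hM⟩ := g.p1 x
    rw [← hM, map_sum]
    refine Submodule.sum_mem _ fun d _ => Submodule.subset_span ⟨d, g.π d x, ?_, rfl⟩
    rw [g.p3, if_pos rfl]
  refine ⟨b, deg, e, he1, ?_, ?_⟩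
  · set φ := Finsupp.linearCombination Λ e
    have hhom : ∀ d x, g.π d x ∈ LinearMap.range φ := by
      intro d
      induction d using Nat.strong_induction_on with
      | _ d ih =>
        intro x
        have hN : ∀ y ∈ N, g.π d y ∈ LinearMap.range φ := by
          intro y hy
          induction hy using Submodule.span_induction with
          | zero => rw [map_zero]; exact zero_mem _
          | add y z _ _ hy hz => rw [map_add]; exact add_mem hy hz
          | smul c y _ hy =>
            have : g.π d (c • y) = c • g.π d y := by
              rw [← algebraMap_smul Λ c y, g.p2, Finset.sum_eq_single 0]
              · rw [G.g4, AlgHom.commutes]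
                simp
              · intro a _ ha
                have : G.π a (algebraMap k Λ c) = 0 := by
                  have h4 := G.g4 (algebraMap k Λ c)
                  rw [AlgHom.commutes] at h4
                  change _ = algebraMap k Λ c at h4
                  rw [← h4, G.g3, if_neg ha]
                rw [this, zero_smul]
              · simp
            rw [this, ← algebraMap_smul Λ c]
            exact Submodule.smul_mem _ _ hy
          | mem y hy =>
            obtain ⟨r, x, hr, rfl⟩ := hy
            rw [g.p2]
            refine Submodule.sum_mem _ fun a ha => ?_
            rcases Nat.eq_zero_or_pos a with rfl | ha0
            · rw [G.g4, hr, map_zero, zero_smul]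
              exact zero_mem _
            · refine Submodule.smul_mem _ _ (ih _ ?_ x)
              rw [Finset.mem_range] at ha
              omega
        have h1 : N.mkQ (g.π d x) ∈ Submodule.span k (Set.range fun i : b => N.mkQ (e i)) := by
          rw [htop]
          trivial
        rw [Finsupp.mem_span_range_iff_exists_finsupp] at h1
        obtain ⟨c, hc⟩ := h1
        have h2 : g.π d x - c.sum (fun i a => a • e i) ∈ N := by
          rw [← Submodule.Quotient.mk_eq_zero, ← Submodule.mkQ_apply, map_sub, ← hc,
            map_finsuppSum]
          simp
        have h3 := hN _ h2
        rw [map_sub, g.p3, if_pos rfl] at h3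
        have h4 : g.π d (c.sum fun i a => a • e i) ∈ LinearMap.range φ := by
          rw [Finsupp.sum, map_sum]
          refine Submodule.sum_mem _ fun i _ => ?_
          have h5 : e i ∈ LinearMap.range φ := ⟨Finsupp.single i 1, by simp [φ]⟩
          rw [← algebraMap_smul Λ (c i), g.p2]
          refine Submodule.sum_mem _ fun a _ => Submodule.smul_mem _ _ ?_
          rw [← he1 i, g.p3]
          split_ifs
          · rw [he1]
            exact h5
          · exact zero_mem _
        simpa using add_mem h3 h4
    intro x
    obtain ⟨M, hM⟩ := g.p1 x
    rw [← hM]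
    exact Submodule.sum_mem (LinearMap.range φ) fun d _ => hhom d x
  · intro f hf
    rw [linearIndependent_iff] at hli'
    have h1 := hli' (f.mapRange ε (map_zero ε)) (by
      rw [Finsupp.linearCombination_apply, Finsupp.sum_mapRange_index (by simp)]
      have h2 : N.mkQ (Finsupp.linearCombination Λ e f) = 0 := by rw [hf, map_zero]
      rw [← h2, Finsupp.linearCombination_apply, map_finsuppSum]
      refine Finsupp.sum_congr fun i _ => ?_
      rw [← map_smul, ← sub_eq_zero, ← map_sub, Submodule.mkQ_apply,
        Submodule.Quotient.mk_eq_zero]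
      refine Submodule.subset_span ⟨algebraMap k Λ (ε (f i)) - f i, e i, ?_, ?_⟩
      · simp
      · rw [sub_smul, algebraMap_smul])
    intro i
    simpa using DFunLike.congr_fun h1 i


open Classical in
/-- the grading on a free module with generators in given degrees -/
noncomputable def free (G : GrAlg ε) {I : Type u} (deg : I → ℕ) : GrMod G (I →₀ Λ) where
  π d :=
    { toFun := fun f => Finsupp.onFinset f.support
        (fun i => if deg i ≤ d then G.π (d - deg i) (f i) else 0) (fun i h => by
          rw [Finsupp.mem_support_iff]
          intro h0
          apply h
          simp [h0])
      map_zero' := by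
        ext i
        simp
      map_add' := fun f g => by
        ext i
        by_cases h : deg i ≤ d <;> simp [h] }
  p1 f := by
    choose N hN using fun i => G.g1 (f i)
    have hN' : ∀ i M, N i ≤ M → ∑ d ∈ Finset.range M, G.π d (f i) = f i := by
      intro i M hM
      conv_rhs => rw [← hN i]
      symm
      refine Finset.sum_subset (fun x hx => ?_) (fun d _ hd => ?_)
      · rw [Finset.mem_range] at hx ⊢
        omega
      · rw [← hN i, map_sum]
        refine Finset.sum_eq_zero fun d' hd' => ?_
        rw [G.g3, if_neg]
        rintro rfl
        exact hd hd'
    refine ⟨f.support.sup (fun i => deg i + N i), ?_⟩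
    ext i
    rw [Finsupp.finsetSum_apply]
    simp only [AddMonoidHom.coe_mk, ZeroHom.coe_mk, Finsupp.onFinset_apply]
    by_cases hi : i ∈ f.support
    · have hle : deg i + N i ≤ f.support.sup (fun i => deg i + N i) :=
        Finset.le_sup (f := fun i => deg i + N i) hi
      obtain ⟨M, hM⟩ := Nat.exists_eq_add_of_le (le_trans (Nat.le_add_right _ _) hle)
      rw [hM, Finset.sum_range_add]
      rw [Finset.sum_eq_zero, zero_add]
      · simp only [Nat.le_add_right, if_true, Nat.add_sub_cancel_left]
        exact hN' i M (by omega)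
      · intro d hd
        rw [if_neg]
        rw [Finset.mem_range] at hd
        omega
    · rw [Finsupp.notMem_support_iff] at hi
      simp [hi]
  p2 d r f := by
    ext i
    rw [Finsupp.finsetSum_apply]
    simp only [AddMonoidHom.coe_mk, ZeroHom.coe_mk, Finsupp.onFinset_apply, Finsupp.smul_apply,
      smul_eq_mul]
    split_ifs with h
    · rw [G.g2]
      refine Finset.sum_subset_zero_on_sdiff (fun a ha => ?_) (fun a ha => ?_) (fun a ha => ?_)
      · rw [Finset.mem_range] at ha ⊢
        omega
      · rw [Finset.mem_sdiff, Finset.mem_range, Finset.mem_range] at ha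
        rw [if_neg (by omega), mul_zero]
      · rw [Finset.mem_range] at ha
        rw [if_pos (by omega)]
        have e1 : d - deg i - a = d - a - deg i := by omega
        rw [e1]
    · symm
      refine Finset.sum_eq_zero fun a ha => ?_
      rw [if_neg (by omega), mul_zero]
  p3 d e f := by
    ext i
    by_cases hde : d = e
    · subst hde
      by_cases h : deg i ≤ d <;> simp [h, G.g3]
    · by_cases h1 : deg i ≤ d <;> by_cases h2 : deg i ≤ e <;> simp [h1, h2, hde, G.g3]
      intro h3
      omega

open Classical in
lemma free_π (G : GrAlg ε) {I : Type u} (deg : I → ℕ) (d : ℕ) (f : I →₀ Λ) (i : I) :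
    (free G deg).π d f i = if deg i ≤ d then G.π (d - deg i) (f i) else 0 := rfl

lemma cover_π (g : GrMod G K) {I : Type u} (deg : I → ℕ) (e : I → K)
    (he : ∀ i, g.π (deg i) (e i) = e i) (d : ℕ) (f : I →₀ Λ) :
    g.π d (Finsupp.linearCombination Λ e f) =
      Finsupp.linearCombination Λ e ((free G deg).π d f) := by
  classical
  induction f using Finsupp.induction_linear with
  | zero => simp
  | add f g hf hg => simp only [map_add, hf, hg]
  | single i r =>
    have h : (free G deg).π d (Finsupp.single i r) =
        Finsupp.single i (if deg i ≤ d then G.π (d - deg i) r else 0) := by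
      ext j
      rw [free_π]
      by_cases hj : j = i
      · subst hj
        simp
      · simp [Finsupp.single_eq_of_ne hj]
    rw [h, Finsupp.linearCombination_single, Finsupp.linearCombination_single, g.p2]
    have h2 : ∀ c, g.π c (e i) = if c = deg i then e i else 0 := by
      intro c
      conv_lhs => rw [← he i]
      rw [g.p3, he]
    simp only [h2]
    split_ifs with h3
    · rw [Finset.sum_eq_single (d - deg i)]
      · rw [if_pos (by omega)]
      · intro a ha hne
        rw [Finset.mem_range] at ha
        rw [if_neg (by omega), smul_zero]
      · intro hn
        rw [Finset.mem_range] at hn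
        omega
    · rw [zero_smul]
      refine Finset.sum_eq_zero fun a _ => ?_
      rw [if_neg (by omega), smul_zero]

/-- grading on a kernel -/
noncomputable def kerGr {F : Type u} [AddCommGroup F] [Module Λ F] (h : GrMod G F) (g : GrMod G K)
    (φ : F →ₗ[Λ] K) (hφ : ∀ d x, g.π d (φ x) = φ (h.π d x)) : GrMod G (LinearMap.ker φ) where
  π d :=
    { toFun := fun x => ⟨h.π d x.1, by
        rw [LinearMap.mem_ker, ← hφ, LinearMap.mem_ker.1 x.2, map_zero]⟩
      map_zero' := Subtype.ext (map_zero _)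
      map_add' := fun x y => Subtype.ext (map_add _ _ _) }
  p1 x := by
    obtain ⟨N, hN⟩ := h.p1 x.1
    refine ⟨N, Subtype.ext ?_⟩
    rw [AddSubmonoidClass.coe_finsetSum]
    exact hN
  p2 d r x := by
    apply Subtype.ext
    rw [AddSubmonoidClass.coe_finsetSum]
    exact h.p2 d r x.1
  p3 d e x := by
    apply Subtype.ext
    have := h.p3 d e x.1
    split_ifs with h1
    · rw [if_pos h1] at this
      exact this
    · rw [if_neg h1] at this
      exact this

end GrMod
end ASR

namespace ASR
variable {k : Type u} [Field k] {Λ : Type u} [Ring Λ] [Algebra k Λ] {ε : Λ →ₐ[k] k}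
  {B : Type u} [Ring B]

/-- projectivity after restriction of scalars -/
def RProj (ι : B →+* Λ) (K : Type u) [AddCommGroup K] [Module Λ K] : Prop :=
  letI : Module B K := Module.compHom K ι
  Module.Projective B K

/-- graded module that is projective over the subring -/
structure GM (G : GrAlg ε) (ι : B →+* Λ) where
  K : Type u
  [ag : AddCommGroup K]
  [mo : Module Λ K]
  gr : GrMod G K
  proj : RProj ι K

attribute [instance] GM.ag GM.mo

/-- one step of the resolution -/
structure StepData {G : GrAlg ε} {ι : B →+* Λ} (M : GM G ι) where
  I : Type u
  φ : (I →₀ Λ) →ₗ[Λ] M.K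
  σ : M.K →+ (I →₀ Λ)
  σ_lin : ∀ b x, σ (ι b • x) = ι b • σ x
  φσ : ∀ x, φ (σ x) = x
  min : ∀ f, φ f = 0 → ∀ i, ε (f i) = 0
  gr : GrMod G (LinearMap.ker φ)

lemma proj_finsupp {P : Type u} [AddCommGroup P] [Module B P] [Module.Projective B P] (I : Type u) :
    Module.Projective B (I →₀ P) := by
  classical
  exact Module.Projective.of_equiv (finsuppLequivDFinsupp (ι := I) (M := P) B).symm

lemma RProj.free {ι : B →+* Λ} (h : RProj ι Λ) (I : Type u) : RProj ι (I →₀ Λ) := by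
  unfold RProj at h ⊢
  letI m1 : Module B Λ := Module.compHom Λ ι
  have h1 : Module.Projective B Λ := h
  have h2 : Module.Projective B (I →₀ Λ) := proj_finsupp I
  exact h2

lemma RProj.lift {ι : B →+* Λ} {K F : Type u} [AddCommGroup K] [Module Λ K] [AddCommGroup F]
    [Module Λ F] (h : RProj ι K) (φ : F →ₗ[Λ] K) (hφ : Function.Surjective φ) :
    ∃ σ : K →+ F, (∀ b x, σ (ι b • x) = ι b • σ x) ∧ ∀ x, φ (σ x) = x := by
  letI m1 : Module B K := Module.compHom K ι
  letI m2 : Module B F := Module.compHom F ι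
  have h1 : Module.Projective B K := h
  let φ' : F →ₗ[B] K :=
    { toFun := φ
      map_add' := map_add φ
      map_smul' := fun b x => map_smul φ (ι b) x }
  obtain ⟨s, hs⟩ := Module.projective_lifting_property φ' LinearMap.id hφ
  exact ⟨s.toAddMonoidHom, fun b x => s.map_smul b x, fun x => LinearMap.congr_fun hs x⟩

lemma RProj.ker {ι : B →+* Λ} {K F : Type u} [AddCommGroup K] [Module Λ K] [AddCommGroup F]
    [Module Λ F] (h : RProj ι F) (φ : F →ₗ[Λ] K) (σ : K →+ F)
    (hσ : ∀ b x, σ (ι b • x) = ι b • σ x) (hφσ : ∀ x, φ (σ x) = x) :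
    RProj ι (LinearMap.ker φ) := by
  letI m1 : Module B (LinearMap.ker φ) := Module.compHom (LinearMap.ker φ) ι
  letI m2 : Module B F := Module.compHom F ι
  have h1 : Module.Projective B F := h
  let i : LinearMap.ker φ →ₗ[B] F :=
    { toFun := fun x => x.1
      map_add' := fun _ _ => rfl
      map_smul' := fun _ _ => rfl }
  let p : F →ₗ[B] LinearMap.ker φ :=
    { toFun := fun x => ⟨x - σ (φ x), by simp [hφσ]⟩
      map_add' := fun x y => Subtype.ext (by simp; abel)
      map_smul' := fun b x => Subtype.ext (by
        change ι b • x - σ (φ (ι b • x)) = ι b • (x - σ (φ x))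
        rw [map_smul, hσ, smul_sub]) }
  refine Module.Projective.of_split i p ?_
  ext x
  change x.1 - σ (φ x.1) = x.1
  rw [LinearMap.mem_ker.1 x.2, map_zero, sub_zero]

lemma exists_step {G : GrAlg ε} {ι : B →+* Λ} (M : GM G ι) : Nonempty (StepData M) := by
  letI : Module k M.K := Module.compHom M.K (algebraMap k Λ)
  haveI : IsScalarTower k Λ M.K := ⟨fun c r x => by
    rw [Algebra.smul_def, mul_smul]
    rfl⟩
  obtain ⟨I, deg, e, he, hs, hm⟩ := M.gr.exists_gens
  obtain ⟨σ, h1, h2⟩ := M.proj.lift _ hs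
  exact ⟨⟨I, Finsupp.linearCombination Λ e, σ, h1, h2, hm,
    GrMod.kerGr (GrMod.free G deg) M.gr _ (M.gr.cover_π deg e he)⟩⟩

/-- chosen step -/
noncomputable def step {G : GrAlg ε} {ι : B →+* Λ} (M : GM G ι) : StepData M :=
  (exists_step M).some

/-- next syzygy -/
noncomputable def next {G : GrAlg ε} {ι : B →+* Λ} (hΛ : RProj ι Λ) (M : GM G ι) : GM G ι where
  K := LinearMap.ker (step M).φ
  gr := (step M).gr
  proj := (hΛ.free _).ker _ (step M).σ (step M).σ_lin (step M).φσ

/-- A minimal graded free resolution of a module, contractible over the subring. -/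
structure BRes (ε : Λ →ₐ[k] k) (ι : B →+* Λ) (K : Type u) [AddCommGroup K] [Module Λ K] where
  I : ℕ → Type u
  d : ∀ i, (I (i + 1) →₀ Λ) →ₗ[Λ] (I i →₀ Λ)
  μ : (I 0 →₀ Λ) →ₗ[Λ] K
  t : K →+ (I 0 →₀ Λ)
  s : ∀ i, (I i →₀ Λ) →+ (I (i + 1) →₀ Λ)
  t_lin : ∀ b x, t (ι b • x) = ι b • t x
  s_lin : ∀ i b x, s i (ι b • x) = ι b • s i x
  μt : ∀ x, μ (t x) = x
  h0 : ∀ x, t (μ x) + d 0 (s 0 x) = x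
  h1 : ∀ i x, s i (d i x) + d (i + 1) (s (i + 1) x) = x
  μd : ∀ x, μ (d 0 x) = 0
  dd : ∀ i x, d i (d (i + 1) x) = 0
  min : ∀ i x l, ε (d i x l) = 0

/-- iterated syzygies -/
noncomputable def seqGM {G : GrAlg ε} {ι : B →+* Λ} (hΛ : RProj ι Λ) (M : GM G ι) : ℕ → GM G ι
  | 0 => M
  | n + 1 => next hΛ (seqGM hΛ M n)

lemma exists_BRes {G : GrAlg ε} {ι : B →+* Λ} (hΛ : RProj ι Λ) (M : GM G ι) :
    Nonempty (BRes ε ι M.K) := by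
  let D : ∀ n, StepData (seqGM hΛ M n) := fun n => step (seqGM hΛ M n)
  let inc : ∀ n, (seqGM hΛ M (n + 1)).K →ₗ[Λ] ((D n).I →₀ Λ) := fun n =>
    (Submodule.subtype (LinearMap.ker (StepData.φ (step (seqGM hΛ M n)))) :
      LinearMap.ker (StepData.φ (step (seqGM hΛ M n))) →ₗ[Λ] ((step (seqGM hΛ M n)).I →₀ Λ))
  let prj : ∀ n, ((D n).I →₀ Λ) →+ (seqGM hΛ M (n + 1)).K := fun n =>
    { toFun := fun x => ⟨x - (D n).σ ((D n).φ x), by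
        change (D n).φ (x - (D n).σ ((D n).φ x)) = 0
        rw [map_sub, (D n).φσ, sub_self]⟩
      map_zero' := Subtype.ext (by
        simp only [map_zero, sub_zero]
        rfl)
      map_add' := fun x y => Subtype.ext (by
        change x + y - (D n).σ ((D n).φ (x + y)) =
          (x - (D n).σ ((D n).φ x)) + (y - (D n).σ ((D n).φ y))
        rw [map_add, map_add]
        abel) }
  have hincprj : ∀ n x, inc n (prj n x) = x - (D n).σ ((D n).φ x) := fun n x => rfl
  have hφinc : ∀ n x, (D n).φ (inc n x) = 0 := fun n x => x.2
  have hprjinc : ∀ n x, prj n (inc n x) = x := fun n x => by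
    refine Subtype.ext ?_
    change inc n x - (D n).σ ((D n).φ (inc n x)) = inc n x
    rw [hφinc, map_zero, sub_zero]
  have hprj_lin : ∀ n b x, prj n (ι b • x) = ι b • prj n x := fun n b x => by
    refine Subtype.ext ?_
    change ι b • x - (D n).σ ((D n).φ (ι b • x)) = ι b • (x - (D n).σ ((D n).φ x))
    rw [map_smul, (D n).σ_lin, smul_sub]
  refine ⟨{
    I := fun n => (D n).I
    d := fun n => inc n ∘ₗ (D (n + 1)).φ
    μ := (D 0).φ
    t := (D 0).σ
    s := fun n => (D (n + 1)).σ.comp (prj n)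
    t_lin := (D 0).σ_lin
    s_lin := fun n b x => ?_
    μt := (D 0).φσ
    h0 := fun x => ?_
    h1 := fun n x => ?_
    μd := fun x => hφinc 0 _
    dd := fun n x => ?_
    min := fun n x l => (D n).min _ (hφinc n _) l }⟩
  · simp only [AddMonoidHom.comp_apply]
    rw [hprj_lin, (D (n + 1)).σ_lin]
  · simp only [AddMonoidHom.comp_apply, LinearMap.comp_apply]
    rw [(D 1).φσ, hincprj]
    exact add_sub_cancel _ _
  · simp only [AddMonoidHom.comp_apply, LinearMap.comp_apply]
    rw [(D (n + 1 + 1)).φσ, hincprj, hprjinc]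
    abel
  · simp only [LinearMap.comp_apply]
    rw [hφinc, map_zero]

end ASR

namespace ASR
section
variable {k : Type u} [Field k] {A : Type u} [Ring A] [Algebra k A] {ε : A →ₐ[k] k}
  {B : Type u} [Ring B] [Algebra k B] {ε' : B →ₐ[k] k}

lemma GrAlg.hom_apply (G : GrAlg ε) {a : ℕ} {x : A} (h : G.π a x = x) (d : ℕ) :
    G.π d x = if d = a then x else 0 := by
  conv_lhs => rw [← h]
  rw [G.g3, h]

lemma sum_delta {M N P : Type*} [AddCommMonoid M] [AddCommMonoid N] [AddCommMonoid P]
    (f : M → N → P) (h1 : ∀ y, f 0 y = 0) (h2 : ∀ x, f x 0 = 0)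
    (a b d : ℕ) (x : M) (y : N) :
    ∑ c ∈ Finset.range (d + 1), f (if c = a then x else 0) (if d - c = b then y else 0) =
      if d = a + b then f x y else 0 := by
  by_cases had : a ≤ d
  · rw [Finset.sum_eq_single a]
    · rw [if_pos rfl]
      by_cases h : d = a + b
      · rw [if_pos h, if_pos (by omega)]
      · rw [if_neg h, if_neg (by omega), h2]
    · intro c _ hc
      rw [if_neg hc, h1]
    · intro h
      exact absurd (Finset.mem_range.2 (by omega)) h
  · rw [if_neg (by omega)]
    refine Finset.sum_eq_zero fun c hc => ?_
    rw [if_neg (by have := Finset.mem_range.1 hc; omega), h1]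

lemma GrAlg.hom_mul (G : GrAlg ε) {a b : ℕ} {x y : A} (hx : G.π a x = x) (hy : G.π b y = y) :
    G.π (a + b) (x * y) = x * y := by
  rw [G.g2]
  simp only [G.hom_apply hx, G.hom_apply hy]
  rw [sum_delta (fun x y => x * y) (by simp) (by simp), if_pos rfl]

lemma GrAlg.hom_ind (G : GrAlg ε) (P : A → Prop) (h0 : P 0) (ha : ∀ x y, P x → P y → P (x + y))
    (h : ∀ a x, G.π a x = x → P x) (x : A) : P x := by
  obtain ⟨N, hN⟩ := G.g1 x
  rw [← hN]
  induction N with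
  | zero => simpa using h0
  | succ n ih =>
    rename_i hx
    clear hN
    rw [Finset.sum_range_succ]
    have key : ∀ m, P (∑ d ∈ Finset.range m, G.π d x) := by
      intro m
      induction m with
      | zero => simpa using h0
      | succ m ih => 
        rw [Finset.sum_range_succ]
        exact ha _ _ ih (h m _ (by rw [G.g3, if_pos rfl]))
    exact ha _ _ (key n) (h n _ (by rw [G.g3, if_pos rfl]))

/-- opposite grading -/
noncomputable def GrAlg.op (G : GrAlg ε) : GrAlg (mopAug ε) where
  π d := (MulOpposite.opLinearEquiv k).toLinearMap ∘ₗ G.π d ∘ₗ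
    (MulOpposite.opLinearEquiv k).symm.toLinearMap
  g1 x := by
    obtain ⟨N, hN⟩ := G.g1 x.unop
    refine ⟨N, MulOpposite.unop_injective ?_⟩
    conv_rhs => rw [← hN]
    simp
  g2 d x y := by
    refine MulOpposite.unop_injective ?_
    simp only [LinearMap.comp_apply, LinearEquiv.coe_coe, MulOpposite.coe_opLinearEquiv_symm,
      MulOpposite.coe_opLinearEquiv, MulOpposite.unop_op, MulOpposite.unop_mul,
      Finset.unop_sum]
    rw [G.g2, ← Finset.sum_range_reflect]
    refine Finset.sum_congr rfl fun a ha => ?_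
    have := Finset.mem_range.1 ha
    rw [show d + 1 - 1 - a = d - a by omega, show d - (d - a) = a by omega]
  g3 d e x := by
    refine MulOpposite.unop_injective ?_
    have := G.g3 d e x.unop
    simp only [LinearMap.comp_apply, LinearEquiv.coe_coe, MulOpposite.coe_opLinearEquiv_symm,
      MulOpposite.coe_opLinearEquiv, MulOpposite.unop_op]
    rw [this]
    split_ifs <;> rfl
  g4 x := by
    refine MulOpposite.unop_injective ?_
    exact G.g4 x.unop

/-- projections of the tensor product -/
noncomputable def tπ (G : GrAlg ε) (G' : GrAlg ε') (d : ℕ) : A ⊗[k] B →ₗ[k] A ⊗[k] B :=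
  ∑ a ∈ Finset.range (d + 1), TensorProduct.map (G.π a) (G'.π (d - a))

lemma tπ_hom (G : GrAlg ε) (G' : GrAlg ε') {a b : ℕ} {x : A} {y : B} (hx : G.π a x = x)
    (hy : G'.π b y = y) (d : ℕ) :
    tπ G G' d (x ⊗ₜ y) = if d = a + b then x ⊗ₜ y else 0 := by
  rw [tπ, LinearMap.sum_apply]
  simp only [TensorProduct.map_tmul, G.hom_apply hx, G'.hom_apply hy]
  rw [sum_delta (fun x y => x ⊗ₜ[k] y) (by simp) (by simp)]

lemma t_ind (G : GrAlg ε) (G' : GrAlg ε') (P : A ⊗[k] B → Prop) (h0 : P 0)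
    (ha : ∀ x y, P x → P y → P (x + y))
    (h : ∀ a b x y, G.π a x = x → G'.π b y = y → P (x ⊗ₜ y)) (z : A ⊗[k] B) : P z := by
  induction z with
  | zero => exact h0
  | add x y hx hy => exact ha _ _ hx hy
  | tmul x y =>
    refine G.hom_ind (fun x => P (x ⊗ₜ y)) (by simpa using h0) (fun x x' hx hx' => ?_)
      (fun a x hx => ?_) x
    · rw [TensorProduct.add_tmul]
      exact ha _ _ hx hx'
    · refine G'.hom_ind (fun y => P (x ⊗ₜ y)) (by simpa using h0) (fun y y' hy hy' => ?_)
        (fun b y hy => ?_) y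
      · rw [TensorProduct.tmul_add]
        exact ha _ _ hy hy'
      · exact h _ _ _ _ hx hy

/-- grading of the tensor product -/
noncomputable def GrAlg.tensor (G : GrAlg ε) (G' : GrAlg ε') :
    GrAlg (Algebra.TensorProduct.productMap ε ε') where
  π := tπ G G'
  g1 z := by
    suffices h : ∃ N, ∀ M, N ≤ M → ∑ d ∈ Finset.range M, tπ G G' d z = z by
      obtain ⟨N, hN⟩ := h
      exact ⟨N, hN N le_rfl⟩
    refine t_ind G G' (fun z => ∃ N, ∀ M, N ≤ M → ∑ d ∈ Finset.range M, tπ G G' d z = z)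
      ?_ ?_ ?_ z
    · exact ⟨0, fun M _ => by simp⟩
    · rintro x y ⟨N, hN⟩ ⟨N', hN'⟩
      refine ⟨max N N', fun M hM => ?_⟩
      simp only [map_add, Finset.sum_add_distrib]
      rw [hN M (le_trans (le_max_left _ _) hM), hN' M (le_trans (le_max_right _ _) hM)]
    · intro a b x y hx hy
      refine ⟨a + b + 1, fun M hM => ?_⟩
      simp only [tπ_hom G G' hx hy]
      rw [Finset.sum_ite_eq', if_pos (Finset.mem_range.2 (by omega))]
  g2 d z w := by
    refine t_ind G G' (fun z => tπ G G' d (z * w) =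
      ∑ a ∈ Finset.range (d + 1), tπ G G' a z * tπ G G' (d - a) w) ?_ ?_ ?_ z
    · simp
    · intro x y hx hy
      rw [add_mul, map_add, hx, hy, ← Finset.sum_add_distrib]
      simp only [map_add, add_mul]
    · intro a b x y hx hy
      refine t_ind G G' (fun w => tπ G G' d ((x ⊗ₜ y) * w) =
        ∑ a ∈ Finset.range (d + 1), tπ G G' a (x ⊗ₜ y) * tπ G G' (d - a) w) ?_ ?_ ?_ w
      · simp
      · intro x' y' hx' hy'
        rw [mul_add, map_add, hx', hy', ← Finset.sum_add_distrib]
        simp only [map_add, mul_add]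
      · intro a' b' x' y' hx' hy'
        simp only [tπ_hom G G' hx hy, tπ_hom G G' hx' hy']
        rw [sum_delta (fun x y => x * y) (by simp) (by simp),
          Algebra.TensorProduct.tmul_mul_tmul, tπ_hom G G' (G.hom_mul hx hx') (G'.hom_mul hy hy'),
          show a + a' + (b + b') = a + b + (a' + b') by omega]
  g3 d e z := by
    refine t_ind G G' (fun z => tπ G G' d (tπ G G' e z) = if d = e then tπ G G' e z else 0)
      ?_ ?_ ?_ z
    · simp
    · intro x y hx hy
      simp only [map_add, hx, hy]
      split_ifs <;> simp
    · intro a b x y hx hy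
      rw [tπ_hom G G' hx hy]
      by_cases h : e = a + b
      · rw [if_pos h, tπ_hom G G' hx hy, h]
      · rw [if_neg h, map_zero]
        simp
  g4 z := by
    induction z with
    | zero => simp
    | add x y hx hy => rw [map_add, hx, hy, map_add, map_add]
    | tmul x y =>
      rw [tπ, LinearMap.sum_apply]
      simp only [zero_add, Finset.sum_range_one, TensorProduct.map_tmul, Nat.sub_zero, G.g4, G'.g4]
      rw [Algebra.TensorProduct.productMap_apply_tmul, Algebra.algebraMap_eq_smul_one,
        Algebra.algebraMap_eq_smul_one, Algebra.algebraMap_eq_smul_one, ← TensorProduct.smul_tmul',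
        TensorProduct.tmul_smul, smul_smul]
      rfl

/-- `A` as a module over the enveloping algebra -/
@[reducible] noncomputable def bimod (k A : Type u) [Field k] [Ring A] [Algebra k A] :
    Module (A ⊗[k] Aᵐᵒᵖ) A :=
  TensorProduct.Algebra.module

lemma bimod_smul (a : A) (b : Aᵐᵒᵖ) (x : A) :
    (letI := bimod k A; (a ⊗ₜ[k] b) • x) = a * (x * b.unop) := rfl

/-- grading of the bimodule -/
noncomputable def bimodGr (G : GrAlg ε) :
    letI := bimod k A
    GrMod (G.tensor G.op) A :=
  letI := bimod k A
  { π := fun d => (G.π d).toAddMonoidHom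
    p1 := G.g1
    p3 := G.g3
    p2 := by
      intro d z w
      change G.π d (z • w) = ∑ a ∈ Finset.range (d + 1), tπ G G.op a z • G.π (d - a) w
      refine t_ind G G.op (fun z => G.π d (z • w) =
        ∑ a ∈ Finset.range (d + 1), tπ G G.op a z • G.π (d - a) w) ?_ ?_ ?_ z
      · simp
      · intro x y hx hy
        rw [add_smul, map_add, hx, hy, ← Finset.sum_add_distrib]
        simp only [map_add, add_smul]
      · intro a b x y hx hy
        refine G.hom_ind (fun w => G.π d ((x ⊗ₜ y : A ⊗[k] Aᵐᵒᵖ) • w) =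
          ∑ a ∈ Finset.range (d + 1), tπ G G.op a (x ⊗ₜ y) • G.π (d - a) w) ?_ ?_ ?_ w
        · simp
        · intro x' y' hx' hy'
          rw [smul_add, map_add, hx', hy', ← Finset.sum_add_distrib]
          simp only [map_add, smul_add]
        · intro c w hw
          have hy' : G.π b y.unop = y.unop := congrArg MulOpposite.unop hy
          simp only [tπ_hom G G.op hx hy, G.hom_apply hw]
          rw [sum_delta (fun (x : A ⊗[k] Aᵐᵒᵖ) (y : A) => x • y) (fun y => zero_smul (A ⊗[k] Aᵐᵒᵖ) y)
            (fun x => smul_zero x), bimod_smul,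
            G.hom_apply (G.hom_mul hx (G.hom_mul hw hy')),
            show a + (c + b) = a + b + c by omega] }

lemma rproj_tensor : RProj (Algebra.TensorProduct.includeRight (R := k) (A := A) (B := B)).toRingHom
    (A ⊗[k] B) := by
  unfold RProj
  letI m1 : Module B (A ⊗[k] B) := Module.compHom (A ⊗[k] B)
    (Algebra.TensorProduct.includeRight (R := k) (A := A) (B := B)).toRingHom
  let e : B ⊗[k] A ≃ₗ[B] A ⊗[k] B :=
    { (TensorProduct.comm k B A).toAddEquiv with
      map_smul' := fun b z => by
        change TensorProduct.comm k B A (b • z) = ((1 : A) ⊗ₜ[k] b) * TensorProduct.comm k B A z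
        induction z with
        | zero => simp
        | add x y hx hy => rw [smul_add, map_add, hx, hy, map_add, mul_add]
        | tmul x y => simp [TensorProduct.smul_tmul'] }
  exact Module.Projective.of_equiv e

lemma rproj_bimod :
    letI := bimod k A
    RProj (Algebra.TensorProduct.includeRight (R := k) (A := A) (B := Aᵐᵒᵖ)).toRingHom A := by
  letI := bimod k A
  unfold RProj
  letI m1 : Module Aᵐᵒᵖ A := Module.compHom A
    (Algebra.TensorProduct.includeRight (R := k) (A := A) (B := Aᵐᵒᵖ)).toRingHom
  let e : Aᵐᵒᵖ ≃ₗ[Aᵐᵒᵖ] A :=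
    { MulOpposite.opAddEquiv.symm with
      map_smul' := fun b z => by
        change z.unop * b.unop = 1 * (z.unop * b.unop)
        rw [one_mul] }
  exact Module.Projective.of_equiv e

lemma exists_bimodRes (G : GrAlg ε) :
    letI := bimod k A
    Nonempty (BRes (Algebra.TensorProduct.productMap ε (mopAug ε))
      (Algebra.TensorProduct.includeRight (R := k) (A := A) (B := Aᵐᵒᵖ)).toRingHom A) := by
  letI := bimod k A
  exact exists_BRes rproj_tensor ({ K := A, gr := bimodGr G, proj := rproj_bimod } :
    GM (G.tensor G.op) (Algebra.TensorProduct.includeRight (R := k) (A := A) (B := Aᵐᵒᵖ)).toRingHom)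

/-- graded algebra data from an honest grading -/
lemma exists_grAlg (𝒜 : ℕ → Submodule k A) [GradedAlgebra 𝒜]
    (hconn : 𝒜 0 = (1 : Submodule k A))
    (hker : RingHom.ker ε.toRingHom = Ideal.span {x : A | ∃ i, 0 < i ∧ x ∈ 𝒜 i}) :
    Nonempty (GrAlg ε) := by
  have hp : ∀ d x, GradedAlgebra.proj 𝒜 d x = ((DirectSum.decompose 𝒜 x d : 𝒜 d) : A) :=
    fun d x => rfl
  have hg3 : ∀ d e x, GradedAlgebra.proj 𝒜 d (GradedAlgebra.proj 𝒜 e x) =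
      if d = e then GradedAlgebra.proj 𝒜 e x else 0 := by
    intro d e x
    rw [hp, hp]
    split_ifs with h
    · subst h
      rw [DirectSum.decompose_of_mem_same _ (SetLike.coe_mem _)]
    · rw [DirectSum.decompose_of_mem_ne _ (SetLike.coe_mem _) (Ne.symm h)]
  have hg1' : ∀ x, ∃ N, ∀ M, N ≤ M → ∑ d ∈ Finset.range M, GradedAlgebra.proj 𝒜 d x = x := by
    intro x
    induction x using DirectSum.Decomposition.inductionOn 𝒜 with
    | zero => exact ⟨0, fun M _ => by simp⟩
    | add x y hx hy =>
      obtain ⟨N, hN⟩ := hx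
      obtain ⟨N', hN'⟩ := hy
      refine ⟨max N N', fun M hM => ?_⟩
      simp only [map_add, Finset.sum_add_distrib]
      rw [hN M (le_trans (le_max_left _ _) hM), hN' M (le_trans (le_max_right _ _) hM)]
    | @homogeneous i m =>
      refine ⟨i + 1, fun M hM => ?_⟩
      rw [Finset.sum_eq_single i]
      · rw [hp, DirectSum.decompose_of_mem_same _ (SetLike.coe_mem _)]
      · intro d _ hd
        rw [hp, DirectSum.decompose_of_mem_ne _ (SetLike.coe_mem _) (Ne.symm hd)]
      · intro h
        exact absurd (Finset.mem_range.2 (by omega)) h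
  have hmul : ∀ d a b (x y : A), x ∈ 𝒜 a → y ∈ 𝒜 b →
      GradedAlgebra.proj 𝒜 d (x * y) = if d = a + b then x * y else 0 := by
    intro d a b x y hx hy
    have hxy : x * y ∈ 𝒜 (a + b) := SetLike.mul_mem_graded hx hy
    rw [hp]
    split_ifs with h
    · subst h
      rw [DirectSum.decompose_of_mem_same _ hxy]
    · rw [DirectSum.decompose_of_mem_ne _ hxy (Ne.symm h)]
  have hhom : ∀ d a (x : A), x ∈ 𝒜 a → GradedAlgebra.proj 𝒜 d x = if d = a then x else 0 := by
    intro d a x hx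
    rw [hp]
    split_ifs with h
    · subst h
      rw [DirectSum.decompose_of_mem_same _ hx]
    · rw [DirectSum.decompose_of_mem_ne _ hx (Ne.symm h)]
  refine ⟨⟨fun d => GradedAlgebra.proj 𝒜 d, fun x => ?_, fun d x y => ?_, hg3, fun x => ?_⟩⟩
  · obtain ⟨N, hN⟩ := hg1' x
    exact ⟨N, hN N le_rfl⟩
  · induction x using DirectSum.Decomposition.inductionOn 𝒜 with
    | zero => simp
    | add x x' hx hx' =>
      rw [add_mul, map_add, hx, hx', ← Finset.sum_add_distrib]
      simp only [map_add, add_mul]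
    | @homogeneous a x =>
      induction y using DirectSum.Decomposition.inductionOn 𝒜 with
      | zero => simp
      | add y y' hy hy' =>
        rw [mul_add, map_add, hy, hy', ← Finset.sum_add_distrib]
        simp only [map_add, mul_add]
      | @homogeneous b y =>
        rw [hmul d a b _ _ x.2 y.2]
        simp only [hhom _ _ _ x.2, hhom _ _ _ y.2]
        rw [sum_delta (fun x y => x * y) (by simp) (by simp)]
  · induction x using DirectSum.Decomposition.inductionOn 𝒜 with
    | zero => simp
    | add x x' hx hx' => simp only [map_add, hx, hx']
    | @homogeneous a x =>
      rw [hhom _ _ _ x.2]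
      split_ifs with h
      · subst h
        have h1 : (x : A) ∈ (1 : Submodule k A) := hconn ▸ x.2
        obtain ⟨c, hc⟩ := Submodule.mem_one.1 h1
        rw [← hc, AlgHom.commutes]
        rfl
      · have : (x : A) ∈ RingHom.ker ε.toRingHom := by
          rw [hker]
          exact Ideal.subset_span ⟨a, by omega, x.2⟩
        have h2 : ε (x : A) = 0 := this
        rw [h2, map_zero]
end
end ASR

namespace ASR
section
variable {k : Type u} [Field k] {A : Type u} [Ring A] [Algebra k A]
  {M : Type u} [AddCommGroup M] [Module k M] [Module A M] [IsScalarTower k A M]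

/-- the inclusion of the second factor -/
noncomputable abbrev inR (k A : Type u) [Field k] [Ring A] [Algebra k A] :
    Aᵐᵒᵖ →+* A ⊗[k] Aᵐᵒᵖ :=
  (Algebra.TensorProduct.includeRight (R := k) (A := A) (B := Aᵐᵒᵖ)).toRingHom

/-- `b ↦ b m` -/
noncomputable def ract (k : Type u) {A : Type u} [Field k] [Ring A] [Algebra k A]
    {M : Type u} [AddCommGroup M] [Module k M] [Module A M] [IsScalarTower k A M] :
    M →ₗ[k] Aᵐᵒᵖ →ₗ[k] M :=
  LinearMap.mk₂ k (fun m b => b.unop • m) (fun m m' b => smul_add _ _ _)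
    (fun c m b => smul_comm _ _ _) (fun m b b' => add_smul _ _ _)
    (fun c m b => smul_assoc _ _ _)

/-- action of an element on free modules -/
noncomputable def act (k : Type u) {A : Type u} [Field k] [Ring A] [Algebra k A]
    {M : Type u} [AddCommGroup M] [Module k M] [Module A M] [IsScalarTower k A M]
    (J : Type u) (m : M) : (J →₀ A ⊗[k] Aᵐᵒᵖ) →ₗ[k] (J →₀ A ⊗[k] M) :=
  Finsupp.mapRange.linearMap (LinearMap.lTensor A (ract k m))

variable {J J' : Type u}

lemma act_apply (m : M) (x : J →₀ A ⊗[k] Aᵐᵒᵖ) (j : J) :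
    act k J m x j = LinearMap.lTensor A (ract k m) (x j) := by
  simp [act]

lemma act_single (m : M) (j : J) (a : A) (b : Aᵐᵒᵖ) :
    act k J m (Finsupp.single j (a ⊗ₜ b)) = Finsupp.single j (a ⊗ₜ (b.unop • m)) := by
  simp [act, ract]

lemma act_add (m m' : M) (x : J →₀ A ⊗[k] Aᵐᵒᵖ) :
    act k J (m + m') x = act k J m x + act k J m' x := by
  ext j
  simp only [Finsupp.add_apply, act_apply, map_add, LinearMap.lTensor_add, LinearMap.add_apply]

lemma act_smul (c : k) (m : M) (x : J →₀ A ⊗[k] Aᵐᵒᵖ) :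
    act k J (c • m) x = c • act k J m x := by
  ext j
  simp only [Finsupp.smul_apply, act_apply, map_smul, LinearMap.lTensor_smul, LinearMap.smul_apply]

lemma finsupp_tensor_ind {N : Type u} [AddCommGroup N] [Module k N] (P : (J →₀ A ⊗[k] N) → Prop)
    (h0 : P 0) (ha : ∀ x y, P x → P y → P (x + y))
    (h : ∀ j a b, P (Finsupp.single j (a ⊗ₜ b))) (x : J →₀ A ⊗[k] N) : P x := by
  induction x using Finsupp.induction_linear with
  | zero => exact h0
  | add x y hx hy => exact ha _ _ hx hy
  | single j z =>
    induction z with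
    | zero => simpa using h0
    | add z w hz hw =>
      rw [Finsupp.single_add]
      exact ha _ _ hz hw
    | tmul a b => exact h j a b

lemma act_left (m : M) (a : A) (x : J →₀ A ⊗[k] Aᵐᵒᵖ) :
    act k J m ((a ⊗ₜ[k] (1 : Aᵐᵒᵖ)) • x) = a • act k J m x := by
  refine finsupp_tensor_ind (fun x => act k J m ((a ⊗ₜ[k] (1 : Aᵐᵒᵖ)) • x) = a • act k J m x)
    (by simp) (fun x y hx hy => by rw [smul_add, map_add, hx, hy, map_add, smul_add])
    (fun j a' b => ?_) x
  rw [Finsupp.smul_single, smul_eq_mul, Algebra.TensorProduct.tmul_mul_tmul, act_single,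
    act_single, Finsupp.smul_single, TensorProduct.smul_tmul', one_mul, smul_eq_mul]

lemma act_right (m : M) (b : Aᵐᵒᵖ) (x : J →₀ A ⊗[k] Aᵐᵒᵖ) :
    act k J m (inR k A b • x) = act k J (b.unop • m) x := by
  refine finsupp_tensor_ind (fun x => act k J m (inR k A b • x) = act k J (b.unop • m) x)
    (by simp) (fun x y hx hy => by rw [smul_add, map_add, hx, hy, map_add])
    (fun j a' b' => ?_) x
  change act k J m (((1 : A) ⊗ₜ[k] b) • Finsupp.single j (a' ⊗ₜ[k] b')) = _
  rw [Finsupp.smul_single, smul_eq_mul, Algebra.TensorProduct.tmul_mul_tmul, act_single,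
    act_single, one_mul, MulOpposite.unop_mul, mul_smul]

lemma act_ind (P : (J →₀ A ⊗[k] M) → Prop)
    (ha : ∀ x y, P x → P y → P (x + y))
    (h : ∀ m x, P (act k J m x)) (x : J →₀ A ⊗[k] M) : P x := by
  refine finsupp_tensor_ind P ?_ ha (fun j a m => ?_) x
  · simpa using h 0 0
  · have := h m (Finsupp.single j (a ⊗ₜ 1))
    rw [act_single] at this
    simpa using this

/-- right-linear maps -/
structure RLin (k : Type u) {A : Type u} [Field k] [Ring A] [Algebra k A] (J : Type u)
    (N : Type u) [AddCommGroup N] [Module (A ⊗[k] Aᵐᵒᵖ) N] where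
  f : (J →₀ A ⊗[k] Aᵐᵒᵖ) →+ N
  lin : ∀ b x, f (inR k A b • x) = inR k A b • f x

/-- auxiliary decomposition -/
lemma single_eq (j : J) (a : A) (b : Aᵐᵒᵖ) :
    Finsupp.single j (a ⊗ₜ[k] b) = inR k A b • Finsupp.single j (a ⊗ₜ[k] (1 : Aᵐᵒᵖ)) := by
  change _ = ((1 : A) ⊗ₜ[k] b) • Finsupp.single j (a ⊗ₜ[k] (1 : Aᵐᵒᵖ))
  rw [Finsupp.smul_single, smul_eq_mul, Algebra.TensorProduct.tmul_mul_tmul, one_mul, mul_one]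

lemma smul_eq_inR (c : k) (x : J →₀ A ⊗[k] Aᵐᵒᵖ) : c • x = inR k A (algebraMap k _ c) • x := by
  have : inR k A (algebraMap k _ c) = algebraMap k (A ⊗[k] Aᵐᵒᵖ) c := by
    exact AlgHom.commutes (Algebra.TensorProduct.includeRight (R := k) (A := A) (B := Aᵐᵒᵖ)) c
  rw [this, algebraMap_smul]

lemma RLin.map_smul (f : RLin k J (J' →₀ A ⊗[k] Aᵐᵒᵖ)) (c : k) (x : J →₀ A ⊗[k] Aᵐᵒᵖ) :
    f.f (c • x) = c • f.f x := by
  rw [smul_eq_inR, f.lin, ← smul_eq_inR]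

lemma exists_T (f : RLin k J (J' →₀ A ⊗[k] Aᵐᵒᵖ)) : ∃ T : (J →₀ A ⊗[k] M) →+ (J' →₀ A ⊗[k] M),
    ∀ m x, T (act k J m x) = act k J' m (f.f x) := by
  let g : ∀ j : J, A ⊗[k] M →ₗ[k] (J' →₀ A ⊗[k] M) := fun j => TensorProduct.lift
    (LinearMap.mk₂ k (fun a m => act k J' m (f.f (Finsupp.single j (a ⊗ₜ 1))))
      (fun a a' m => by rw [TensorProduct.add_tmul, Finsupp.single_add, map_add, map_add])
      (fun c a m => by
        rw [← TensorProduct.smul_tmul', ← Finsupp.smul_single, f.map_smul, LinearMap.map_smul])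
      (fun a m m' => act_add _ _ _)
      (fun c a m => act_smul _ _ _))
  refine ⟨(Finsupp.lsum k g).toAddMonoidHom, fun m x => ?_⟩
  refine finsupp_tensor_ind (fun x => (Finsupp.lsum k g).toAddMonoidHom (act k J m x) =
    act k J' m (f.f x)) (by simp) (fun x y hx hy => by rw [map_add, map_add, hx, hy, map_add,
      map_add]) (fun j a b => ?_) x
  rw [single_eq, f.lin, act_right, act_right, act_single]
  change Finsupp.lsum k g _ = _
  rw [Finsupp.lsum_single]
  change act k J' ((1 : Aᵐᵒᵖ).unop • b.unop • m) _ = _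
  rw [MulOpposite.unop_one, one_smul]

attribute [local instance] bimod

lemma exists_Tμ (f : RLin k J A) : ∃ T : (J →₀ A ⊗[k] M) →+ M,
    ∀ m x, T (act k J m x) = f.f x • m := by
  have hsm : ∀ (c : k) x, f.f (c • x) = c • f.f x := by
    intro c x
    rw [smul_eq_inR, f.lin]
    change (1 : A) * (f.f x * algebraMap k A c) = _
    rw [one_mul, ← Algebra.commutes, Algebra.smul_def]
  have hr : ∀ (b : Aᵐᵒᵖ) x, f.f (inR k A b • x) = f.f x * b.unop := by
    intro b x
    rw [f.lin]
    change (1 : A) * (f.f x * b.unop) = _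
    rw [one_mul]
  let g : ∀ j : J, A ⊗[k] M →ₗ[k] M := fun j => TensorProduct.lift
    (LinearMap.mk₂ k (fun a m => (f.f (Finsupp.single j (a ⊗ₜ 1))) • m)
      (fun a a' m => by rw [TensorProduct.add_tmul, Finsupp.single_add, map_add, add_smul])
      (fun c a m => by
        rw [← TensorProduct.smul_tmul', ← Finsupp.smul_single, hsm, smul_assoc])
      (fun a m m' => smul_add _ _ _)
      (fun c a m => smul_comm _ _ _))
  refine ⟨(Finsupp.lsum k g).toAddMonoidHom, fun m x => ?_⟩
  refine finsupp_tensor_ind (fun x => (Finsupp.lsum k g).toAddMonoidHom (act k J m x) =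
    f.f x • m) (by simp) (fun x y hx hy => by rw [map_add, map_add, hx, hy, map_add,
      add_smul]) (fun j a b => ?_) x
  rw [single_eq, hr, act_right, act_single]
  change Finsupp.lsum k g _ = _
  rw [Finsupp.lsum_single]
  change (f.f (Finsupp.single j (a ⊗ₜ 1))) • ((1 : Aᵐᵒᵖ).unop • b.unop • m) = _
  rw [MulOpposite.unop_one, one_smul, mul_smul]

/-- functoriality in the module -/
noncomputable def cmap (J : Type u) (c : M →ₗ[A] M) : (J →₀ A ⊗[k] M) →ₗ[k] (J →₀ A ⊗[k] M) :=
  Finsupp.mapRange.linearMap (LinearMap.lTensor A (c.restrictScalars k))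

lemma cmap_single (c : M →ₗ[A] M) (j : J) (a : A) (m : M) :
    cmap J c (Finsupp.single j (a ⊗ₜ[k] m)) = Finsupp.single j (a ⊗ₜ c m) := by
  simp [cmap]

lemma cmap_act (c : M →ₗ[A] M) (m : M) (x : J →₀ A ⊗[k] Aᵐᵒᵖ) :
    cmap J c (act k J m x) = act k J (c m) x := by
  refine finsupp_tensor_ind (fun x => cmap J c (act k J m x) = act k J (c m) x)
    (by simp) (fun x y hx hy => by rw [map_add, map_add, hx, hy, map_add])
    (fun j a b => ?_) x
  rw [act_single, act_single, cmap_single, LinearMap.map_smul]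

variable {ε : A →ₐ[k] k}

/-- the induced resolution of an arbitrary module -/
structure TRes (F : BRes (Algebra.TensorProduct.productMap ε (mopAug ε)) (inR k A) A)
    (M : Type u) [AddCommGroup M] [Module k M] [Module A M] [IsScalarTower k A M] where
  δ : ∀ i, (F.I (i + 1) →₀ A ⊗[k] M) →ₗ[A] (F.I i →₀ A ⊗[k] M)
  aug : (F.I 0 →₀ A ⊗[k] M) →ₗ[A] M
  aug_surj : Function.Surjective aug
  exact0 : ∀ x, aug x = 0 ↔ ∃ y, δ 0 y = x
  exact : ∀ i x, δ i x = 0 ↔ ∃ y, δ (i + 1) y = x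
  δ_act : ∀ i m x, δ i (act k _ m x) = act k _ m (F.d i x)
  δ_nat : ∀ i c x, δ i (cmap _ c x) = cmap _ c (δ i x)
  aug_nat : ∀ (c : M →ₗ[A] M) x, aug (cmap _ c x) = c (aug x)

lemma exists_TRes (F : BRes (Algebra.TensorProduct.productMap ε (mopAug ε)) (inR k A) A) :
    Nonempty (TRes F M) := by
  choose D hD using fun i => exists_T (M := M)
    (⟨(F.d i).toAddMonoidHom, fun b x => (F.d i).map_smul _ x⟩ :
      RLin k (F.I (i + 1)) (F.I i →₀ A ⊗[k] Aᵐᵒᵖ))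
  choose S hS using fun i => exists_T (M := M)
    (⟨F.s i, F.s_lin i⟩ : RLin k (F.I i) (F.I (i + 1) →₀ A ⊗[k] Aᵐᵒᵖ))
  obtain ⟨U, hU⟩ := exists_Tμ (M := M)
    (⟨F.μ.toAddMonoidHom, fun b x => F.μ.map_smul _ x⟩ : RLin k (F.I 0) A)
  replace hD : ∀ i m x, D i (act k _ m x) = act k _ m (F.d i x) := hD
  replace hS : ∀ i m x, S i (act k _ m x) = act k _ m (F.s i x) := hS
  replace hU : ∀ m x, U (act k _ m x) = F.μ x • m := hU
  have ht : ∀ a : A, F.t a = inR k A (MulOpposite.op a) • F.t 1 := by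
    intro a
    rw [← F.t_lin]
    congr 1
    change a = (1 : A) * (1 * a)
    rw [one_mul, one_mul]
  have hUt : ∀ m, U (act k _ m (F.t 1)) = m := fun m => by rw [hU, F.μt, one_smul]
  have hDD : ∀ i x, D i (D (i + 1) x) = 0 := fun i x =>
    act_ind (fun x => D i (D (i + 1) x) = 0) (fun x y hx hy => by
      rw [map_add, map_add, hx, hy, add_zero]) (fun m x => by
      rw [hD, hD, F.dd, map_zero]) x
  have hUD : ∀ x, U (D 0 x) = 0 := fun x =>
    act_ind (fun x => U (D 0 x) = 0) (fun x y hx hy => by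
      rw [map_add, map_add, hx, hy, add_zero]) (fun m x => by
      rw [hD, hU, F.μd, zero_smul]) x
  have hH : ∀ i x, S i (D i x) + D (i + 1) (S (i + 1) x) = x := fun i x =>
    act_ind (fun x => S i (D i x) + D (i + 1) (S (i + 1) x) = x) (fun x y hx hy => by
      conv_rhs => rw [← hx, ← hy]
      simp only [map_add]
      abel) (fun m x => by
      rw [hD, hS, hS, hD, ← map_add, F.h1]) x
  have hH0 : ∀ x, act k _ (U x) (F.t 1) + D 0 (S 0 x) = x := fun x =>
    act_ind (fun x => act k _ (U x) (F.t 1) + D 0 (S 0 x) = x) (fun x y hx hy => by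
      conv_rhs => rw [← hx, ← hy]
      simp only [map_add, act_add]
      abel) (fun m x => by
      rw [hU, hS, hD]
      have := act_right m (MulOpposite.op (F.μ x)) (F.t 1)
      rw [MulOpposite.unop_op, ← ht] at this
      rw [← this, ← map_add, F.h0]) x
  refine ⟨⟨fun i => { D i with map_smul' := fun a x => ?_ },
    { U with map_smul' := fun a x => ?_ }, fun m => ⟨_, hUt m⟩, fun x => ⟨fun h => ?_, ?_⟩,
    fun i x => ⟨fun h => ?_, ?_⟩, hD, fun i c x => ?_, fun c x => ?_⟩⟩
  · change D i (a • x) = a • D i x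
    refine act_ind (fun x => D i (a • x) = a • D i x) (fun x y hx hy => by
      simp only [map_add, smul_add, hx, hy]) (fun m x => ?_) x
    rw [← act_left, hD, hD, LinearMap.map_smul, act_left]
  · change U (a • x) = a • U x
    refine act_ind (fun x => U (a • x) = a • U x) (fun x y hx hy => by
      simp only [map_add, smul_add, hx, hy]) (fun m x => ?_) x
    rw [← act_left, hU, hU, LinearMap.map_smul, ← mul_smul]
    congr 1
    change a * (F.μ x * 1) = _
    rw [mul_one]
  · change U x = 0 at h
    refine ⟨S 0 x, ?_⟩
    change D 0 (S 0 x) = x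
    have := hH0 x
    rw [h] at this
    have h0 : act k (F.I 0) (0 : M) (F.t 1) = 0 := by
      have := act_smul (0 : k) (0 : M) (F.t 1)
      rwa [smul_zero, zero_smul] at this
    rwa [h0, zero_add] at this
  · rintro ⟨y, rfl⟩
    exact hUD y
  · change D i x = 0 at h
    refine ⟨S (i + 1) x, ?_⟩
    change D (i + 1) (S (i + 1) x) = x
    have := hH i x
    rwa [h, map_zero, zero_add] at this
  · rintro ⟨y, rfl⟩
    exact hDD i y
  · change D i (cmap _ c x) = cmap _ c (D i x)
    refine act_ind (fun x => D i (cmap _ c x) = cmap _ c (D i x)) (fun x y hx hy => by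
      simp only [map_add, hx, hy]) (fun m x => ?_) x
    rw [cmap_act, hD, hD, cmap_act]
  · change U (cmap _ c x) = c (U x)
    refine act_ind (fun x => U (cmap _ c x) = c (U x)) (fun x y hx hy => by
      simp only [map_add, hx, hy]) (fun m x => ?_) x
    rw [cmap_act, hU, hU, LinearMap.map_smul]

/-- The minimal free resolution of the trivial module. -/
lemma exists_MFR [Module A k] (hk : ∀ (r : A) (c : k), r • c = ε r * c)
    (F : BRes (Algebra.TensorProduct.productMap ε (mopAug ε)) (inR k A) A) :
    ∃ E : MFR ε, E.I = F.I := by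
  haveI : IsScalarTower k A k := ⟨fun c a x => by
    rw [hk, hk, map_smul, smul_eq_mul, smul_eq_mul, mul_assoc]⟩
  obtain ⟨T⟩ := exists_TRes (M := k) F
  let r : ∀ J : Type u, (J →₀ A ⊗[k] k) ≃ₗ[A] (J →₀ A) := fun J =>
    Finsupp.mapRange.linearEquiv (TensorProduct.AlgebraTensorModule.rid k A A)
  have hr : ∀ (J : Type u) (m : k) (x : J →₀ A ⊗[k] Aᵐᵒᵖ) l, ε (r J (act k J m x) l) =
      Algebra.TensorProduct.productMap ε (mopAug ε) (x l) * m := by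
    intro J m x l
    change ε (TensorProduct.AlgebraTensorModule.rid k A A (act k J m x l)) = _
    rw [act_apply]
    induction x l with
    | zero => simp
    | add z w hz hw => simp only [map_add, hz, hw, add_mul]
    | tmul a b =>
      rw [LinearMap.lTensor_tmul, TensorProduct.AlgebraTensorModule.rid_tmul,
        Algebra.TensorProduct.productMap_apply_tmul, map_smul]
      change (b.unop • m) • ε a = ε a * ε b.unop * m
      rw [hk, smul_eq_mul]
      ring
  refine ⟨⟨F.I, fun i => (r _).toLinearMap ∘ₗ T.δ i ∘ₗ (r _).symm.toLinearMap,
    T.aug ∘ₗ (r _).symm.toLinearMap, ?_, ?_, ?_, ?_⟩, rfl⟩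
  · exact T.aug_surj.comp (r _).symm.surjective
  · intro x
    change T.aug ((r _).symm x) = 0 ↔ ∃ y, r _ (T.δ 0 ((r _).symm y)) = x
    rw [T.exact0]
    constructor
    · rintro ⟨y, hy⟩
      exact ⟨r _ y, by rw [LinearEquiv.symm_apply_apply, hy, LinearEquiv.apply_symm_apply]⟩
    · rintro ⟨y, hy⟩
      exact ⟨(r _).symm y, by rw [← hy, LinearEquiv.symm_apply_apply]⟩
  · intro i x
    change r _ (T.δ i ((r _).symm x)) = 0 ↔ ∃ y, r _ (T.δ (i + 1) ((r _).symm y)) = x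
    rw [LinearEquiv.map_eq_zero_iff, T.exact]
    constructor
    · rintro ⟨y, hy⟩
      exact ⟨r _ y, by rw [LinearEquiv.symm_apply_apply, hy, LinearEquiv.apply_symm_apply]⟩
    · rintro ⟨y, hy⟩
      exact ⟨(r _).symm y, by rw [← hy, LinearEquiv.symm_apply_apply]⟩
  · intro i x l
    change ε (r _ (T.δ i ((r _).symm x)) l) = 0
    refine act_ind (fun y => ε (r _ (T.δ i y) l) = 0) (fun x y hx hy => ?_) (fun m x => ?_) _
    · rw [map_add, map_add, Finsupp.add_apply, map_add, hx, hy, add_zero]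
    · rw [T.δ_act, hr, F.min, zero_mul]

end
end ASR

namespace ASR
section
variable {k : Type u} [Field k] {A : Type u} [Ring A] [Algebra k A]
  {C : Type u} [Ring C] [Algebra k C]

/-- external tensor product module -/
@[reducible] noncomputable def tmod (k A C N : Type u) [Field k] [Ring A] [Algebra k A]
    [Ring C] [Algebra k C] [AddCommGroup N] [Module k N] [Module C N] [IsScalarTower k C N] :
    Module (A ⊗[k] C) (A ⊗[k] N) :=
  Module.compHom (A ⊗[k] N) ((Module.endTensorEndAlgHom (R := k) (S := k) (A := k) (M := A) (N := N)).comp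
    (Algebra.TensorProduct.map (Algebra.lsmul k k A) (Algebra.lsmul k k N))).toRingHom

variable {N : Type u} [AddCommGroup N] [Module k N] [Module C N] [IsScalarTower k C N]

lemma tmod_smul (a a' : A) (c : C) (x : N) :
    (letI := tmod k A C N; (a ⊗ₜ[k] c) • (a' ⊗ₜ[k] x)) = (a * a') ⊗ₜ (c • x) := rfl

lemma tmod_lin {N' : Type u} [AddCommGroup N'] [Module (A ⊗[k] C) N']
    (f : A ⊗[k] N →+ N') (h : ∀ (a : A) (c : C) (a' : A) (x : N), f ((a * a') ⊗ₜ (c • x)) = (a ⊗ₜ[k] c) • f (a' ⊗ₜ x))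
    (r : A ⊗[k] C) (x : A ⊗[k] N) :
    letI := tmod k A C N
    f (r • x) = r • f x := by
  letI := tmod k A C N
  change f (r • x) = r • f x
  induction r with
  | zero => simp only [zero_smul, map_zero]
  | add r s hr hs => rw [add_smul, map_add, hr, hs, add_smul]
  | tmul a c =>
    induction x with
    | zero => simp only [smul_zero, map_zero]
    | add r s hr hs => rw [smul_add, map_add, hr, hs, map_add, smul_add]
    | tmul a' x =>
      rw [← h]
      rfl

lemma tmod_proj [Module.Projective C N] :
    letI := tmod k A C N
    Module.Projective (A ⊗[k] C) (A ⊗[k] N) := by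
  classical
  letI := tmod k A C N
  obtain ⟨s, hs⟩ := (Module.projective_def' (R := C) (P := N)).1 inferInstance
  haveI : IsScalarTower k C (N →₀ C) := inferInstance
  let i0 : A ⊗[k] N →ₗ[k] (N →₀ A ⊗[k] C) :=
    (TensorProduct.finsuppRight k k A C N).toLinearMap ∘ₗ LinearMap.lTensor A (s.restrictScalars k)
  have hi0 : ∀ a x l, i0 (a ⊗ₜ x) l = a ⊗ₜ (s x l) := by
    intro a x l
    simp [i0]
  let i : A ⊗[k] N →ₗ[A ⊗[k] C] (N →₀ A ⊗[k] C) :=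
    { i0 with
      map_smul' := fun r x => tmod_lin i0.toAddMonoidHom (fun a c a' x => by
        ext l
        change i0 _ l = (a ⊗ₜ[k] c) • (i0 _ l)
        rw [hi0, hi0, map_smul, smul_eq_mul, Algebra.TensorProduct.tmul_mul_tmul]
        rfl) r x }
  let p : (N →₀ A ⊗[k] C) →ₗ[A ⊗[k] C] A ⊗[k] N :=
    Finsupp.linearCombination (A ⊗[k] C) (fun x => (1 : A) ⊗ₜ[k] x)
  refine Module.Projective.of_split i p ?_
  have key : ∀ a (f : N →₀ C), p (TensorProduct.finsuppRight k k A C N (a ⊗ₜ f)) =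
      a ⊗ₜ (Finsupp.linearCombination C id f) := by
    intro a f
    induction f using Finsupp.induction_linear with
    | zero => simp only [TensorProduct.tmul_zero, map_zero]
    | add f g hf hg => simp only [TensorProduct.tmul_add, map_add, hf, hg]
    | single x c =>
      have : TensorProduct.finsuppRight k k A C N (a ⊗ₜ Finsupp.single x c) =
          Finsupp.single x (a ⊗ₜ c) := by
        ext l
        rw [TensorProduct.finsuppRight_apply_tmul_apply, Finsupp.single_apply, Finsupp.single_apply]
        split_ifs <;> simp
      rw [this, Finsupp.linearCombination_single, Finsupp.linearCombination_single, tmod_smul,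
        mul_one]
      rfl
  ext z
  change p (i0 z) = z
  induction z with
  | zero => simp only [map_zero]
  | add z w hz hw => rw [map_add, map_add, hz, hw]
  | tmul a x =>
    change p (TensorProduct.finsuppRight k k A C N (a ⊗ₜ s x)) = _
    rw [key]
    exact congrArg _ (LinearMap.congr_fun hs x)

lemma tmod_pd (p : ℕ) (h : HasProjectiveDimensionLE (ModuleCat.of C N) p) :
    letI := tmod k A C N
    HasProjectiveDimensionLE (ModuleCat.of (A ⊗[k] C) (A ⊗[k] N)) p := by
  letI := tmod k A C N
  obtain ⟨P, hP, hp⟩ := exists_res p (ModuleCat.of C N) h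
  letI mk : ∀ i, Module k (P.X i) := fun i => Module.compHom (P.X i) (algebraMap k C)
  haveI st : ∀ i, IsScalarTower k C (P.X i) := fun i => ⟨fun c r x => by
    rw [Algebra.smul_def, mul_smul]
    rfl⟩
  letI tm : ∀ i, Module (A ⊗[k] C) (A ⊗[k] P.X i) := fun i => tmod k A C (P.X i)
  let aug' : P.X 0 →ₗ[C] N := P.aug
  let D : ∀ i, A ⊗[k] P.X (i + 1) →ₗ[k] A ⊗[k] P.X i := fun i =>
    LinearMap.lTensor A ((P.d i).restrictScalars k)
  let U : A ⊗[k] P.X 0 →ₗ[k] A ⊗[k] N := LinearMap.lTensor A (aug'.restrictScalars k)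
  have hU : Function.Surjective U := LinearMap.lTensor_surjective A P.aug_surj
  have h0 : Function.Exact (D 0) U := Module.Flat.lTensor_exact A (fun x => P.exact0 x)
  have h1 : ∀ i, Function.Exact (D (i + 1)) (D i) := fun i =>
    Module.Flat.lTensor_exact A (fun x => P.exact i x)
  let Q : XRes (A ⊗[k] C) (A ⊗[k] N) :=
    { X := fun i => ModuleCat.of (A ⊗[k] C) (A ⊗[k] P.X i)
      d := fun i =>
        { D i with
          map_smul' := fun r x => tmod_lin (D i).toAddMonoidHom (fun a c a' x => by
            change (a * a') ⊗ₜ[k] (P.d i (c • x)) = (a * a') ⊗ₜ[k] (c • P.d i x)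
            rw [LinearMap.map_smul]) r x }
      aug :=
        { U with
          map_smul' := fun r x => tmod_lin U.toAddMonoidHom (fun a c a' x => by
            change (a * a') ⊗ₜ[k] (aug' (c • x)) = (a * a') ⊗ₜ[k] (c • aug' x)
            rw [LinearMap.map_smul]) r x }
      aug_surj := hU
      exact0 := fun x => h0 x
      exact := fun i x => h1 i x }
  have := pd_of_res 0 p Q (fun i => ?_) (fun i hi => ?_)
  · exact this
  · have h1 : Module.Projective (A ⊗[k] C) (A ⊗[k] P.X i) :=
      haveI := hP i
      tmod_proj
    have h2 : Projective (ModuleCat.of (A ⊗[k] C) (A ⊗[k] P.X i)) :=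
      (IsProjective.iff_projective _).1 h1
    change HasProjectiveDimensionLE (ModuleCat.of (A ⊗[k] C) (A ⊗[k] P.X i)) 0
    infer_instance
  · haveI := hp i hi
    change Subsingleton (A ⊗[k] P.X i)
    infer_instance

lemma tmod_pd_finsupp (p : ℕ) (J : Type u) (h : HasProjectiveDimensionLE (ModuleCat.of C (J →₀ N)) p) :
    letI := tmod k A C N
    HasProjectiveDimensionLE (ModuleCat.of (A ⊗[k] C) (J →₀ A ⊗[k] N)) p := by
  classical
  letI := tmod k A C N
  letI := tmod k A C (J →₀ N)
  have h1 := tmod_pd (k := k) (A := A) p h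
  let g : A ⊗[k] (J →₀ N) →+ (J →₀ A ⊗[k] N) :=
    (TensorProduct.finsuppRight k k A N J).toLinearMap.toAddMonoidHom
  have hg : ∀ a x l, g (a ⊗ₜ x) l = a ⊗ₜ x l := fun a x l =>
    TensorProduct.finsuppRight_apply_tmul_apply a x l
  have hlin : ∀ (r : A ⊗[k] C) x, g (r • x) = r • g x :=
    tmod_lin (k := k) (A := A) (C := C) (N := J →₀ N) (N' := J →₀ A ⊗[k] N) g (fun a c a' x => by
      ext l
      rw [Finsupp.smul_apply, hg, hg, tmod_smul]
      rfl)
  let e : A ⊗[k] (J →₀ N) ≃ₗ[A ⊗[k] C] (J →₀ A ⊗[k] N) :=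
    { (TensorProduct.finsuppRight k k A N J).toAddEquiv with
      map_smul' := hlin }
  exact hasProjectiveDimensionLT_of_iso e.toModuleIso _

end
end ASR

namespace ASR
section
variable {k : Type u} [Field k] {A : Type u} [Ring A] [Algebra k A] {ε : A →ₐ[k] k}
  {C : Type u} [Ring C] [Algebra k C]

attribute [local instance] bimod

lemma bres_isEmpty [Module A k] (hk : ∀ (r : A) (c : k), r • c = ε r * c)
    (F : BRes (Algebra.TensorProduct.productMap ε (mopAug ε)) (inR k A) A) (n : ℕ)
    (hpd : (ModuleCat.of A k).projDim ≤ n) (i : ℕ) (hi : n < i) : IsEmpty (F.I i) := by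
  obtain ⟨E, hE⟩ := exists_MFR hk F
  rw [← hE]
  exact MFR.isEmpty hk E n hpd i hi

lemma mod_pd (F : BRes (Algebra.TensorProduct.productMap ε (mopAug ε)) (inR k A) A) (n : ℕ)
    (hF : ∀ i, n < i → IsEmpty (F.I i)) (M : ModuleCat.{u} A) : HasProjectiveDimensionLE M n := by
  letI mk : Module k M := Module.compHom M (algebraMap k A)
  haveI st : IsScalarTower k A M := ⟨fun c r x => by
    rw [Algebra.smul_def, mul_smul]
    rfl⟩
  obtain ⟨T⟩ := exists_TRes (M := M) F
  let Q : XRes A M :=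
    { X := fun i => ModuleCat.of A (F.I i →₀ A ⊗[k] M)
      d := T.δ
      aug := T.aug
      aug_surj := T.aug_surj
      exact0 := T.exact0
      exact := T.exact }
  have := pd_of_res 0 n Q (fun i => ?_) (fun i hi => ?_)
  · exact this
  · have h1 : Module.Projective A (F.I i →₀ A ⊗[k] M) := proj_finsupp _
    have h2 : Projective (ModuleCat.of A (F.I i →₀ A ⊗[k] M)) :=
      (IsProjective.iff_projective _).1 h1
    change HasProjectiveDimensionLE (ModuleCat.of A (F.I i →₀ A ⊗[k] M)) 0
    infer_instance
  · haveI := hF i hi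
    change Subsingleton (F.I i →₀ A ⊗[k] M)
    infer_instance

lemma tensor_pd (F : BRes (Algebra.TensorProduct.productMap ε (mopAug ε)) (inR k A) A) (n p : ℕ)
    (hF : ∀ i, n < i → IsEmpty (F.I i))
    (hC : ∀ M : ModuleCat.{u} C, HasProjectiveDimensionLE M p)
    (M : ModuleCat.{u} (A ⊗[k] C)) : HasProjectiveDimensionLE M (n + p) := by
  letI mk : Module k M := Module.compHom M (algebraMap k (A ⊗[k] C))
  letI mA : Module A M := Module.compHom M
    (Algebra.TensorProduct.includeLeft (R := k) (S := k) (A := A) (B := C)).toRingHom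
  letI mC : Module C M := Module.compHom M
    (Algebra.TensorProduct.includeRight (R := k) (A := A) (B := C)).toRingHom
  have hmk : ∀ (c : k) (x : M), c • x = algebraMap k (A ⊗[k] C) c • x := fun _ _ => rfl
  have hmA : ∀ (a : A) (x : M), a • x = (a ⊗ₜ[k] (1 : C)) • x := fun _ _ => rfl
  have hmC : ∀ (a : C) (x : M), a • x = ((1 : A) ⊗ₜ[k] a) • x := fun _ _ => rfl
  have hAC : ∀ (a : A) (c : C) (x : M), (a ⊗ₜ[k] c) • x = a • c • x := fun a c x => by
    rw [hmA, hmC, ← mul_smul, Algebra.TensorProduct.tmul_mul_tmul, one_mul, mul_one]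
  have hCA : ∀ (a : A) (c : C) (x : M), (a ⊗ₜ[k] c) • x = c • a • x := fun a c x => by
    rw [hmA, hmC, ← mul_smul, Algebra.TensorProduct.tmul_mul_tmul, one_mul, mul_one]
  haveI stA : IsScalarTower k A M := ⟨fun c r x => by
    rw [hmk, hmA, hmA, ← mul_smul, ← Algebra.smul_def, TensorProduct.smul_tmul']⟩
  haveI stC : IsScalarTower k C M := ⟨fun c r x => by
    rw [hmk, hmC, hmC, ← mul_smul, ← Algebra.smul_def, TensorProduct.tmul_smul]⟩
  letI tm : Module (A ⊗[k] C) (A ⊗[k] M) := tmod k A C M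
  obtain ⟨T⟩ := exists_TRes (M := M) F
  let cl : C → (M →ₗ[A] M) := fun c =>
    { toFun := fun x => c • x
      map_add' := smul_add c
      map_smul' := fun a x => by
        rw [RingHom.id_apply, ← hAC, ← hCA] }
  have hsm : ∀ (J : Type u) (a : A) (c : C) (x : J →₀ A ⊗[k] M),
      (a ⊗ₜ[k] c) • x = a • cmap J (cl c) x := by
    intro J a c x
    refine finsupp_tensor_ind (fun x => (a ⊗ₜ[k] c) • x = a • cmap J (cl c) x) ?_ ?_ ?_ x
    · rw [map_zero, smul_zero, smul_zero]
    · intro x y hx hy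
      rw [smul_add, hx, hy, map_add, smul_add]
    · intro j a' m
      rw [cmap_single, Finsupp.smul_single, Finsupp.smul_single, tmod_smul,
        TensorProduct.smul_tmul', smul_eq_mul]
      rfl
  let Q : XRes (A ⊗[k] C) M :=
    { X := fun i => ModuleCat.of (A ⊗[k] C) (F.I i →₀ A ⊗[k] M)
      d := fun i =>
        { toFun := T.δ i
          map_add' := map_add _
          map_smul' := fun r x => by
            change T.δ i (r • x) = r • T.δ i x
            induction r with
            | zero => rw [zero_smul, zero_smul, map_zero]
            | add r s hr hs => rw [add_smul, add_smul, map_add, hr, hs]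
            | tmul a c => rw [hsm, hsm, LinearMap.map_smul, T.δ_nat] }
      aug :=
        { toFun := T.aug
          map_add' := map_add _
          map_smul' := fun r x => by
            change T.aug (r • x) = r • T.aug x
            induction r with
            | zero => rw [zero_smul, zero_smul, map_zero]
            | add r s hr hs => rw [add_smul, add_smul, map_add, hr, hs]
            | tmul a c =>
              rw [hsm, LinearMap.map_smul, T.aug_nat, hAC]
              rfl }
      aug_surj := T.aug_surj
      exact0 := T.exact0
      exact := T.exact }
  refine pd_of_res p n Q (fun i => ?_) (fun i hi => ?_)
  · exact tmod_pd_finsupp p (F.I i) (hC _)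
  · haveI := hF i hi
    change Subsingleton (F.I i →₀ A ⊗[k] M)
    infer_instance

end
end ASR

/-- Proposition 4.5(a): if `A` is an Artin–Schelter regular connected graded
`k`-algebra of global dimension `n`, then `A^e = A ⊗[k] Aᵐᵒᵖ` is Artin–Schelter regular of
global dimension `2n` (with respect to the induced augmentation `ε ⊗ εᵒᵖ`). -/
theorem stmt_11 (k : Type u) [Field k] (A : Type u) [Ring A] [Algebra k A]
    (𝒜 : ℕ → Submodule k A) [GradedAlgebra 𝒜]
    (hconn : 𝒜 0 = (1 : Submodule k A))
    (ε : A →ₐ[k] k)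
    (hker : RingHom.ker ε.toRingHom = Ideal.span {x : A | ∃ i, 0 < i ∧ x ∈ 𝒜 i})
    (n : ℕ) (hA : IsASRegularAug k A ε n) :
    IsASRegularAug k (A ⊗[k] Aᵐᵒᵖ) (Algebra.TensorProduct.productMap ε (mopAug ε)) (2 * n) := by
  obtain ⟨G⟩ := ASR.exists_grAlg 𝒜 hconn hker
  obtain ⟨F⟩ := ASR.exists_bimodRes G
  obtain ⟨F'⟩ := ASR.exists_bimodRes G.op
  letI mA : Module A k := Module.compHom k ε.toRingHom
  letI mB : Module Aᵐᵒᵖ k := Module.compHom k (mopAug ε).toRingHom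
  obtain ⟨hgd, hne, heq, -, -⟩ := hA
  have hkA : ∀ (r : A) (c : k), r • c = ε r * c := fun _ _ => rfl
  have hkB : ∀ (r : Aᵐᵒᵖ) (c : k), r • c = mopAug ε r * c := fun _ _ => rfl
  have hpd : (ModuleCat.of A k).projDim ≤ n := by
    rw [← hgd]
    exact le_iSup (fun M : ModuleCat.{u} A => M.projDim) (ModuleCat.of A k)
  obtain ⟨E, -⟩ := ASR.exists_MFR hkA F
  obtain ⟨P⟩ := ASR.MFR.toPDRes hkA E n ⟨hpd, hne, heq⟩
  have hF := ASR.bres_isEmpty hkA F n hpd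
  have hF' := ASR.bres_isEmpty hkB F' n (P.op.projDim_le hkB)
  have hpdAll : ∀ M : ModuleCat.{u} (A ⊗[k] Aᵐᵒᵖ), HasProjectiveDimensionLE M (n + n) :=
    ASR.tensor_pd F n n hF (ASR.mod_pd F' n hF')
  rw [two_mul]
  have PT := P.tensor P.op
  have PTo := PT.op
  letI m1 : Module (A ⊗[k] Aᵐᵒᵖ) k :=
    Module.compHom k (Algebra.TensorProduct.productMap ε (mopAug ε)).toRingHom
  letI m2 : Module (A ⊗[k] Aᵐᵒᵖ)ᵐᵒᵖ k :=
    Module.compHom k (mopAug (Algebra.TensorProduct.productMap ε (mopAug ε))).toRingHom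
  have hk1 : ∀ (r : A ⊗[k] Aᵐᵒᵖ) (c : k),
    r • c = Algebra.TensorProduct.productMap ε (mopAug ε) r * c := fun _ _ => rfl
  have hk2 : ∀ (r : (A ⊗[k] Aᵐᵒᵖ)ᵐᵒᵖ) (c : k),
    r • c = mopAug (Algebra.TensorProduct.productMap ε (mopAug ε)) r * c := fun _ _ => rfl
  refine ⟨le_antisymm ?_ ?_, fun m hm => PT.ext_ne hk1 m hm, PT.ext_eq hk1,
    fun m hm => PTo.ext_ne hk2 m hm, PTo.ext_eq hk2⟩
  · exact iSup_le fun M => ASR.projDim_le M (hpdAll M)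
  · by_contra hlt
    rw [not_le] at hlt
    have h1 := ASR.ext_vanish k (ModuleCat.of (A ⊗[k] Aᵐᵒᵖ) k)
      (ModuleCat.of (A ⊗[k] Aᵐᵒᵖ) (A ⊗[k] Aᵐᵒᵖ)) (n + n)
      (lt_of_le_of_lt (le_iSup (fun M : ModuleCat.{u} (A ⊗[k] Aᵐᵒᵖ) => M.projDim) _) hlt)
    obtain ⟨e⟩ := PT.ext_eq hk1
    have h2 : Subsingleton k := e.symm.toEquiv.subsingleton
    exact one_ne_zero (Subsingleton.elim (1 : k) 0)
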